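/- Let p ≥ 2 be an integer and η > 0. Let (c_k)_{k≥1} be complex numbers, (φ_k)_{k≥1} real numbers, and γ_k : (0,∞) → ℂ functions such that V(x) = Σ_{k=1}^∞ c_k e^{−iφ_k x} γ_k(x) is real-valued, and assume: τ := sup_k Var(γ_k,(0,∞)) < ∞; ∫_0^∞ (sup_k |γ_k(x)|)^p dx < ∞; Σ_k |c_k| < ∞; Σ_{k_1,…,k_j} |c_{k_1} ⋯ c_{k_j} h_j(η; φ_{k_1},…,φ_{k_j})| < ∞ for j = 1,…,p−1; Kη ≠ ε_1 φ_{k_1} + ⋯ + ε_J φ_{k_J} for all integers 1 ≤ K ≤ J ≤ p, all indices and all signs ε_i ∈ {+1,−1}; and there is an involution k ↦ k* of the index set with c_{k*} = conj(c_k), φ_{k*} = −φ_k and γ_{k*} = conj(γ_k). Let θ : (0,∞) → ℝ be locally absolutely continuous with θ'(x) = (V(x)/η)·(cos(ηx + 2θ(x)) − 1) for almost every x, set β_k(x) = c_k e^{−iφ_k x} γ_k(x), S_{J,0}(x) = Σ_{m_1,…,m_J=1}^∞ f_{J,0}(η; φ_{m_1},…,φ_{m_J}) β_{m_1}(x) ⋯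 β_{m_J}(x), and 𝓔_{J,0} = Σ_{m_1,…,m_J=1}^∞ |c_{m_1} ⋯ c_{m_J} 𝒢_{J,0}(η; φ_{m_1},…,φ_{m_J})|. Then for every J ∈ {2,…,p} and all 0 ≤ a < b < ∞, | Im ∫_a^b S_{J,0}(x) dx | ≤ 𝓔_{J,0} τ^J. -/

import Mathlib

open scoped BigOperators ENNReal
open MeasureTheory

/-- The functions `h_J` of `1+J` real variables (extra variables beyond the first `J`
are ignored), defined recursively by `h_0(η) = 1` and
`h_J(η;φ_1,…,φ_J) = (η - φ_1 - ⋯ - φ_J)⁻¹ Σ_{j=0}^{J-1} h_j(η;φ_1,…,φ_j) h_{J-j-1}(η;φ_{j+1},…,φ_{J-1})`. -/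
noncomputable def hFun : ℕ → ℝ → (ℕ → ℝ) → ℝ
  | 0, _, _ => 1
  | (J+1), η, φ =>
      (η - ∑ i ∈ Finset.range (J+1), φ i)⁻¹ *
        ∑ j ∈ (Finset.range (J+1)).attach,
          hFun j.1 η φ * hFun (J - j.1) η (fun i => φ (i + j.1))
  termination_by J _ _ => J
  decreasing_by
  · exact Nat.lt_of_lt_of_le (Finset.mem_range.mp j.2) (Nat.le_refl _)
  · exact Nat.lt_succ_of_le (Nat.sub_le J j.1)

/-- Pad a tuple `m : Fin J → ℕ` of indices into a function `ℕ → ℝ` listing `φ_{m_1},…,φ_{m_J}`. -/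
noncomputable def padFin (J : ℕ) (φ : ℕ → ℝ) (m : Fin J → ℕ) : ℕ → ℝ :=
  fun n => if h : n < J then φ (m ⟨n, h⟩) else 0

/-- ω_a coefficients: ω_0 = -1, ω_{±1} = 1/2, otherwise 0. -/
noncomputable def omegaCoef : ℤ → ℝ := fun a =>
  if a = 0 then -1 else if a = 1 ∨ a = -1 then (1 : ℝ) / 2 else 0

/-- The functions `f_{J,K}` of `1+J` real variables (extra variables beyond the first `J`
are ignored); `f_{J,K} = 0` unless `1 ≤ J` and `0 ≤ K ≤ J`. For `J ≥ 2`,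
`f_{J,K}(η;φ) = η⁻¹ Σ_{a=-1}^{1} ω_a (1/J!) Σ_{σ ∈ S_J} g_{J-1,K+a}(η;φ_{σ(1)},…,φ_{σ(J-1)})`,
where `g_{J,K}(η;φ) = -2K (Kη - φ_1 - ⋯ - φ_J)⁻¹ f_{J,K}(η;φ)` is inlined. -/
noncomputable def fAux : ℕ → ℤ → ℝ → (ℕ → ℝ) → ℝ
  | 0, _, _, _ => 0
  | 1, K, η, _ => if K = 0 then -η⁻¹ else if K = 1 then η⁻¹ else 0
  | (J+2), K, η, φ =>
      if 0 ≤ K ∧ K ≤ (J : ℤ) + 2 then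
        η⁻¹ * ∑ a ∈ ({-1, 0, 1} : Finset ℤ), omegaCoef a *
          ((Nat.factorial (J+2) : ℝ)⁻¹ *
            ∑ σ : Equiv.Perm (Fin (J+2)),
              (fun ψ : ℕ → ℝ =>
                (-2 * ((K + a : ℤ) : ℝ)) /
                    (((K + a : ℤ) : ℝ) * η - ∑ i ∈ Finset.range (J+1), ψ i) *
                  fAux (J+1) (K+a) η ψ)
              (fun i => if h : i < J+2 then φ (σ ⟨i, h⟩) else φ i))
      else 0

/-- The functions `g_{J,K} = -2K (Kη - φ_1 - ⋯ - φ_J)⁻¹ f_{J,K}`. -/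
noncomputable def gAux (J : ℕ) (K : ℤ) (η : ℝ) (φ : ℕ → ℝ) : ℝ :=
  (-2 * (K : ℝ)) / ((K : ℝ) * η - ∑ i ∈ Finset.range J, φ i) * fAux J K η φ

/-- Symmetric product `p ⊙ q` of a function of `1+I` variables and one of `1+J` variables. -/
noncomputable def symProd (I J : ℕ) (p q : ℝ → (ℕ → ℝ) → ℝ) (η : ℝ) (φ : ℕ → ℝ) : ℝ :=
  (Nat.factorial (I + J) : ℝ)⁻¹ *
    ∑ σ : Equiv.Perm (Fin (I + J)),
      p η (fun i => if h : i < I + J then φ (σ ⟨i, h⟩) else φ i) *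
      q η (fun i => if h : i + I < I + J then φ (σ ⟨i + I, h⟩) else φ (i + I))

/-- `𝒢_{J,0} = Σ_{j=1}^{J-1} Σ_{k=1}^{min(j,J-j)} (1/(4k)) g_{j,k} ⊙ ğ_{J-j,k}`, where
`ğ_{J,K}(η;φ_1,…,φ_J) = g_{J,K}(η;-φ_1,…,-φ_J)`. -/
noncomputable def GFun (J : ℕ) (η : ℝ) (φ : ℕ → ℝ) : ℝ :=
  ∑ j ∈ Finset.Icc 1 (J - 1), ∑ k ∈ Finset.Icc 1 (min j (J - j)),
    (1 / (4 * (k : ℝ))) *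
      symProd j (J - j) (fun η' ψ => gAux j (k : ℤ) η' ψ)
        (fun η' ψ => gAux (J - j) (k : ℤ) η' (fun i => -ψ i)) η φ

/-- `𝓔_{J,0} = Σ_{m_1,…,m_J} |c_{m_1} ⋯ c_{m_J} 𝒢_{J,0}(η;φ_{m_1},…,φ_{m_J})| ∈ [0,∞]`. -/
noncomputable def calEFun (η : ℝ) (c : ℕ → ℂ) (φ : ℕ → ℝ) (J : ℕ) : ℝ≥0∞ :=
  ∑' m : Fin J → ℕ,
    (‖∏ i, c (m i)‖₊ : ℝ≥0∞) * (‖GFun J η (padFin J φ m)‖₊ : ℝ≥0∞)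

/-- `S_{J,0}(x) = Σ_{m_1,…,m_J} f_{J,0}(η;φ_{m_1},…,φ_{m_J}) β_{m_1}(x) ⋯ β_{m_J}(x)`
with `β_k(x) = c_k e^{-iφ_k x} γ_k(x)`. -/
noncomputable def SFun0 (η : ℝ) (c : ℕ → ℂ) (φ : ℕ → ℝ) (γ : ℕ → ℝ → ℂ)
    (J : ℕ) (x : ℝ) : ℂ :=
  ∑' m : Fin J → ℕ,
    (fAux J 0 η (padFin J φ m) : ℂ) *
      ∏ i, (c (m i) * Complex.exp (-Complex.I * φ (m i) * x) * γ (m i) x)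

/-! Integrating termwise, `∫ S_{J,0}` is a sum over words `m` of `f_{J,0}(φ_m) ∏ c_{m_i}` times the
oscillatory integral `I_m` of `e^{-iΦx} ∏ γ_{m_i}`, where `Φ = ∑ φ_{m_i}`. The involution turns
the complex conjugate of the term of `m*` into the term of `m` with `f_{J,0}(-φ_m)` in place of
`f_{J,0}(φ_m)`, and `f_{J,0}(-φ) - f_{J,0}(φ) = Φ 𝒢_{J,0}(φ)`. Hence, up to sign, `2i` times the
imaginary part is a sum of terms `𝒢_{J,0}(φ_m) ∏ c_{m_i} · Φ I_m`, and `|Φ I_m| ≤ 2 τ^J` by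
integration by parts, as `∏ γ_{m_i}` has bounded variation and vanishes at infinity.

The identity becomes short for generating polynomials, in which symmetrized functions of `J`
variables are homogeneous polynomials of degree `J`, `⊙` is multiplication and the factor
`φ_1 + ⋯ + φ_J` is a derivation `D`. The recursion for `h` makes `H = ∑ η^{-J} h_J` a solution of a
Riccati equation, and non-resonance forces the series of `g_{·,K}` to be `2 (1 - H)^K`. So `𝒢` is
generated by `-log (1 - U V)`, with `U = 1 - H` and `V` its counterpart for `-φ`, and the two
Riccati equations make `D` of the logarithm collapse to the difference of the values of `f`. -/

/-! ### Tuples, sequences and symmetrization -/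

section Sequences

variable {J : ℕ}

/-- The sequence starting with the entries of a tuple and continued by zeros: the encoding of the
arguments of a function of finitely many variables in the definitions above. -/
def zeroExtend {R : Type*} [Zero R] (w : Fin J → R) (i : ℕ) : R :=
  if h : i < J then w ⟨i, h⟩ else 0

lemma zeroExtend_of_lt {R : Type*} [Zero R] (w : Fin J → R) {i : ℕ} (h : i < J) :
    zeroExtend w i = w ⟨i, h⟩ := dif_pos h

lemma zeroExtend_of_le {R : Type*} [Zero R] (w : Fin J → R) {i : ℕ} (h : J ≤ i) :
    zeroExtend w i = 0 := dif_neg h.not_gt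

lemma zeroExtend_neg {R : Type*} [SubtractionMonoid R] (w : Fin J → R) :
    zeroExtend (-w) = -zeroExtend w := by
  funext i
  by_cases h : i < J <;> simp [zeroExtend, h]

lemma sum_range_zeroExtend {R : Type*} [AddCommMonoid R] (w : Fin J → R) :
    ∑ i ∈ Finset.range J, zeroExtend w i = ∑ i, w i := by
  rw [Finset.sum_range]
  exact Finset.sum_congr rfl fun i _ => zeroExtend_of_lt w i.2

lemma zeroExtend_append {R : Type*} [Zero R] {I : ℕ} (v : Fin I → R) (w : Fin J → R) (i : ℕ) :
    zeroExtend (Fin.append v w) (i + I) = zeroExtend w i := by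
  rcases lt_or_ge i J with hi | hi
  · rw [zeroExtend_of_lt _ hi, zeroExtend_of_lt _ (by omega), ← Fin.append_right v w]
    exact congrArg _ (Fin.ext (Nat.add_comm i I))
  · rw [zeroExtend_of_le _ hi, zeroExtend_of_le _ (by omega)]

/-- The action of a permutation of the first `J` indices on sequences. -/
def permuteFirst {R : Type*} (σ : Equiv.Perm (Fin J)) (w : ℕ → R) (i : ℕ) : R :=
  if h : i < J then w (σ ⟨i, h⟩) else w i

lemma permuteFirst_permuteFirst {R : Type*} (σ τ : Equiv.Perm (Fin J)) (w : ℕ → R) :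
    permuteFirst σ (permuteFirst τ w) = permuteFirst (τ * σ) w := by
  funext i
  by_cases h : i < J <;> simp [permuteFirst, h]

lemma permuteFirst_zeroExtend {R : Type*} [Zero R] (σ : Equiv.Perm (Fin J)) (w : Fin J → R) :
    permuteFirst σ (zeroExtend w) = zeroExtend (w ∘ σ) := by
  funext i
  by_cases h : i < J <;> simp [permuteFirst, zeroExtend, h]

lemma permuteFirst_neg {R : Type*} [Neg R] (σ : Equiv.Perm (Fin J)) (w : ℕ → R) :
    permuteFirst σ (-w) = -permuteFirst σ w := by
  funext i
  by_cases h : i < J <;> simp [permuteFirst, h]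

lemma sum_range_permuteFirst {R : Type*} [AddCommMonoid R] (σ : Equiv.Perm (Fin J)) (w : ℕ → R) :
    ∑ i ∈ Finset.range J, permuteFirst σ w i = ∑ i ∈ Finset.range J, w i := by
  simp only [Finset.sum_range, permuteFirst, Fin.is_lt, dite_true, Fin.eta]
  exact Equiv.sum_comp σ fun i => w i

/-- The average of a function of sequences over the permutations of the first `J` variables. -/
noncomputable def symmetrize (J : ℕ) : ((ℕ → ℝ) → ℝ) →ₗ[ℝ] ((ℕ → ℝ) → ℝ) :=
  (J.factorial : ℝ)⁻¹ • ∑ σ : Equiv.Perm (Fin J), LinearMap.funLeft ℝ ℝ (permuteFirst σ)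

lemma symmetrize_apply (p : (ℕ → ℝ) → ℝ) (w : ℕ → ℝ) :
    symmetrize J p w = (J.factorial : ℝ)⁻¹ * ∑ σ : Equiv.Perm (Fin J), p (permuteFirst σ w) := by
  simp [symmetrize, LinearMap.funLeft_apply]

lemma symmetrize_permuteFirst (p : (ℕ → ℝ) → ℝ) (τ : Equiv.Perm (Fin J)) (w : ℕ → ℝ) :
    symmetrize J p (permuteFirst τ w) = symmetrize J p w := by
  simp only [symmetrize_apply, permuteFirst_permuteFirst]
  exact congrArg _ (Equiv.sum_comp (Equiv.mulLeft τ) fun σ => p (permuteFirst σ w))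

lemma symmetrize_eq_self {p : (ℕ → ℝ) → ℝ}
    (h : ∀ (σ : Equiv.Perm (Fin J)) (w : ℕ → ℝ), p (permuteFirst σ w) = p w) :
    symmetrize J p = p := by
  funext w
  simp [symmetrize_apply, h, Fintype.card_perm, Nat.factorial_ne_zero]

lemma symmetrize_symmetrize (p : (ℕ → ℝ) → ℝ) :
    symmetrize J (symmetrize J p) = symmetrize J p :=
  symmetrize_eq_self (symmetrize_permuteFirst p)

lemma symmetrize_sum_range_mul (p : (ℕ → ℝ) → ℝ) :
    symmetrize J (fun w => (∑ i ∈ Finset.range J, w i) * p w) =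
      fun w => (∑ i ∈ Finset.range J, w i) * symmetrize J p w := by
  funext w
  simp only [symmetrize_apply, sum_range_permuteFirst, ← Finset.mul_sum]
  ring

lemma symmetrize_comp_neg (p : (ℕ → ℝ) → ℝ) :
    symmetrize J (fun w => p (-w)) = fun w => symmetrize J p (-w) := by
  funext w
  simp only [symmetrize_apply, permuteFirst_neg]

lemma abs_symmetrize_le (p : (ℕ → ℝ) → ℝ) (w : ℕ → ℝ) :
    |symmetrize J p w| ≤ ∑ σ : Equiv.Perm (Fin J), |p (permuteFirst σ w)| := by
  rw [symmetrize_apply, abs_mul, abs_of_nonneg (by positivity)]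
  refine (mul_le_of_le_one_left (abs_nonneg _) ?_).trans (Finset.abs_sum_le_sum_abs _ _)
  exact inv_le_one_of_one_le₀ (mod_cast J.factorial_pos)

lemma dependsOn_symmetrize {p : (ℕ → ℝ) → ℝ} (hp : DependsOn p (Set.Iio J)) :
    DependsOn (symmetrize J p) (Set.Iio J) := by
  intro v w h
  rw [symmetrize_apply, symmetrize_apply]
  congr! 2 with σ
  refine hp fun i (hi : i < J) => ?_
  rw [permuteFirst, permuteFirst, dif_pos hi, dif_pos hi]
  exact h _ (σ ⟨i, hi⟩).2

lemma dependsOn_sum_range (J : ℕ) :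
    DependsOn (fun w : ℕ → ℝ => ∑ i ∈ Finset.range J, w i) (Set.Iio J) := fun _ _ h =>
  Finset.sum_congr rfl fun i hi => h i (Finset.mem_range.mp hi)

end Sequences

/-! ### The recursions for `f`, `g` and `h` -/

section Recursions

open Finset.HasAntidiagonal (antidiagonal mem_antidiagonal)

lemma fAux_eq_zero (J : ℕ) {K : ℤ} (η : ℝ) (h : K < 0 ∨ J < K) : fAux J K η = 0 := by
  funext w
  match J with
  | 0 => simp [fAux]
  | 1 =>
    push_cast at h
    rw [fAux, if_neg (by omega), if_neg (by omega), Pi.zero_apply]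
  | J + 2 =>
    push_cast at h
    rw [fAux, if_neg (by omega), Pi.zero_apply]

lemma gAux_eq_zero (J : ℕ) {K : ℤ} (η : ℝ) (h : K ≤ 0 ∨ J < K) : gAux J K η = 0 := by
  funext w
  rcases eq_or_ne K 0 with rfl | hK
  · simp [gAux]
  · simp [gAux, fAux_eq_zero J (K := K) η (by omega)]

lemma fAux_add_two (J : ℕ) (K : ℤ) (η : ℝ) :
    fAux (J + 2) K η = (η⁻¹ / 2) • symmetrize (J + 2)
      (gAux (J + 1) (K - 1) η - (2 : ℝ) • gAux (J + 1) K η + gAux (J + 1) (K + 1) η) := by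
  by_cases hK : 0 ≤ K ∧ K ≤ (J : ℤ) + 2
  · have unfolded (w : ℕ → ℝ) : fAux (J + 2) K η w = η⁻¹ * ∑ a ∈ ({-1, 0, 1} : Finset ℤ),
        omegaCoef a * symmetrize (J + 2) (gAux (J + 1) (K + a) η) w := by
      simp only [symmetrize_apply]
      rw [fAux, if_pos hK]
      rfl
    funext w
    rw [unfolded, Finset.sum_insert (by decide), Finset.sum_insert (by decide),
      Finset.sum_singleton, add_zero, ← sub_eq_add_neg]
    simp only [omegaCoef, map_add, map_sub, map_smul, Pi.smul_apply, Pi.add_apply, Pi.sub_apply,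
      smul_eq_mul]
    norm_num
    ring
  · have vanish : K < 0 ∨ ((J + 2 : ℕ) : ℤ) < K := by push_cast; omega
    rw [fAux_eq_zero _ _ vanish, gAux_eq_zero _ _ (by omega), gAux_eq_zero _ _ (by omega),
      gAux_eq_zero _ _ (by omega), smul_zero, sub_zero, add_zero, map_zero, smul_zero]

lemma dependsOn_gAux_of_fAux {J : ℕ} {K : ℤ} {η : ℝ} (hf : DependsOn (fAux J K η) (Set.Iio J)) :
    DependsOn (gAux J K η) (Set.Iio J) := by
  intro v w h
  have hsum := dependsOn_sum_range J h
  dsimp only at hsum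
  rw [gAux, gAux, hf h, hsum]

lemma dependsOn_fAux (J : ℕ) (K : ℤ) (η : ℝ) : DependsOn (fAux J K η) (Set.Iio J) := by
  match J with
  | 0 => intro v w _; simp [fAux]
  | 1 => intro v w _; simp [fAux]
  | J + 2 =>
    have hg (L : ℤ) : DependsOn (gAux (J + 1) L η) (Set.Iio (J + 2)) :=
      (dependsOn_gAux_of_fAux (dependsOn_fAux (J + 1) L η)).mono
        (Set.Iio_subset_Iio (Nat.le_succ _))
    intro v w h
    rw [fAux_add_two, Pi.smul_apply, Pi.smul_apply, dependsOn_symmetrize _ h]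
    intro v w h
    simp only [Pi.add_apply, Pi.sub_apply, Pi.smul_apply, hg _ h]

lemma dependsOn_gAux (J : ℕ) (K : ℤ) (η : ℝ) : DependsOn (gAux J K η) (Set.Iio J) :=
  dependsOn_gAux_of_fAux (dependsOn_fAux J K η)

lemma hFun_succ (J : ℕ) (η : ℝ) (w : ℕ → ℝ) :
    hFun (J + 1) η w = (η - ∑ i ∈ Finset.range (J + 1), w i)⁻¹ *
      ∑ x ∈ antidiagonal J, hFun x.1 η w * hFun x.2 η (fun i => w (i + x.1)) := by
  rw [hFun, Finset.sum_attach (Finset.range (J + 1))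
    fun j => hFun j η w * hFun (J - j) η (fun i => w (i + j)),
    Finset.Nat.sum_antidiagonal_eq_sum_range_succ_mk]

lemma dependsOn_hFun (J : ℕ) (η : ℝ) : DependsOn (hFun J η) (Set.Iio J) := by
  induction J using Nat.strong_induction_on with
  | _ J ih =>
    match J with
    | 0 => intro v w _; simp [hFun]
    | J + 1 =>
      intro v w h
      have hsum := dependsOn_sum_range (J + 1) h
      dsimp only at hsum
      rw [hFun_succ, hFun_succ, hsum]
      congr! 2 with x hx
      have hx : x.1 + x.2 = J := mem_antidiagonal.mp hx
      have hshift : ∀ i ∈ Set.Iio x.2, v (i + x.1) = w (i + x.1) := fun i (hi : i < x.2) =>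
        h _ (Set.mem_Iio.mpr (by omega))
      rw [ih x.1 (by omega) fun i (hi : i < x.1) => h i (Set.mem_Iio.mpr (by omega)),
        ih x.2 (by omega) hshift]

lemma symProd_eq_symmetrize (I L : ℕ) (p q : ℝ → (ℕ → ℝ) → ℝ) (η : ℝ) :
    symProd I L p q η = symmetrize (I + L) (fun w => p η w * q η (fun i => w (i + I))) := by
  funext w
  rw [symmetrize_apply]
  rfl

lemma symmetrize_fAux (J : ℕ) (K : ℤ) (η : ℝ) :
    symmetrize (J + 2) (fAux (J + 2) K η) = fAux (J + 2) K η := by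
  rw [fAux_add_two, map_smul, symmetrize_symmetrize]

lemma GFun_eq_sum (J : ℕ) (η : ℝ) :
    GFun J η = ∑ j ∈ Finset.Icc 1 (J - 1), ∑ k ∈ Finset.Icc 1 (min j (J - j)),
      (4 * (k : ℝ))⁻¹ • symProd j (J - j) (gAux j k) (fun η w => gAux (J - j) k η (-w)) η := by
  funext w
  simp only [Finset.sum_apply, ← one_div]
  rfl

lemma symmetrize_GFun (J : ℕ) (η : ℝ) : symmetrize J (GFun J η) = GFun J η := by
  simp only [GFun_eq_sum, map_sum, map_smul]
  refine Finset.sum_congr rfl fun j hj => Finset.sum_congr rfl fun k _ => congrArg _ ?_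
  have split : j + (J - j) = J := Nat.add_sub_cancel' (by rw [Finset.mem_Icc] at hj; omega)
  rw [symProd_eq_symmetrize, split, symmetrize_symmetrize]

end Recursions

/-! ### Generating polynomials -/

section GeneratingPolynomials

open MvPolynomial

section Content

variable {ι : Type*} {J : ℕ}

/-- The exponent vector counting how often each letter occurs in a word. -/
noncomputable def content (m : Fin J → ι) : ι →₀ ℕ := ∑ i, Finsupp.single (m i) 1

lemma degree_content (m : Fin J → ι) : (content m).degree = J := by
  simp [content, Finsupp.degree_single]

lemma weight_content {M : Type*} [AddCommMonoid M] (ψ : ι → M) (m : Fin J → ι) :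
    Finsupp.weight ψ (content m) = ∑ i, ψ (m i) := by
  simp [content, Finsupp.weight_single]

lemma content_append {I : ℕ} (m : Fin I → ι) (n : Fin J → ι) :
    content (Fin.append m n) = content m + content n := by
  simp [content, Fin.sum_univ_add]

lemma content_comp_perm (m : Fin J → ι) (σ : Equiv.Perm (Fin J)) :
    content (m ∘ σ) = content m :=
  Equiv.sum_comp σ fun i => Finsupp.single (m i) 1

lemma exists_content_eq (d : ι →₀ ℕ) : ∃ m : Fin d.degree → ι, content m = d := by
  suffices ∃ (J : ℕ) (m : Fin J → ι), content m = d by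
    obtain ⟨J, m, rfl⟩ := this
    rw [degree_content]
    exact ⟨m, rfl⟩
  induction d using Finsupp.induction_linear with
  | zero => exact ⟨0, Fin.elim0, Finset.sum_empty⟩
  | add d e hd he =>
    obtain ⟨I, m, rfl⟩ := hd
    obtain ⟨J, n, rfl⟩ := he
    exact ⟨I + J, Fin.append m n, content_append m n⟩
  | single i k => exact ⟨k, fun _ => i, by simp [content]⟩

lemma content_eq_content_id_iff {m : Fin J → Fin J} :
    content m = content id ↔ Function.Bijective m := by
  constructor
  · intro hm
    refine Finite.surjective_iff_bijective.mp fun j => ?_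
    by_contra! hj
    simpa [content, Finsupp.finsetSum_apply, hj, Finsupp.single_apply] using DFunLike.congr_fun hm j
  · intro hm
    exact content_comp_perm id (Equiv.ofBijective m hm)

end Content

section WeightDerivation

variable {ι : Type*}

/-- The derivation scaling the variable `X i` by `ψ i`. -/
noncomputable def weightDeriv (ψ : ι → ℝ) :
    Derivation ℝ (MvPolynomial ι ℝ) (MvPolynomial ι ℝ) :=
  mkDerivation ℝ fun i => ψ i • X i

lemma weightDeriv_neg (ψ : ι → ℝ) : weightDeriv (-ψ) = -weightDeriv ψ := by
  refine derivation_ext fun i => ?_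
  simp [weightDeriv, mkDerivation_X]

lemma weightDeriv_monomial (ψ : ι → ℝ) (d : ι →₀ ℕ) (r : ℝ) :
    weightDeriv ψ (monomial d r) = Finsupp.weight ψ d • monomial d r := by
  rw [weightDeriv, mkDerivation_monomial, Finsupp.weight_apply, Finsupp.sum, Finsupp.sum,
    Finset.smul_sum, Finset.sum_smul]
  refine Finset.sum_congr rfl fun i hi => ?_
  have cancel : d - Finsupp.single i 1 + Finsupp.single i 1 = d :=
    tsub_add_cancel_of_le (Finsupp.single_le_iff.mpr
      (Nat.one_le_iff_ne_zero.mpr (Finsupp.mem_support_iff.mp hi)))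
  simp only [X, smul_monomial, monomial_mul, smul_eq_mul, cancel, nsmul_eq_mul]
  congr 1
  ring

lemma coeff_weightDeriv (ψ : ι → ℝ) (d : ι →₀ ℕ) (P : MvPolynomial ι ℝ) :
    coeff d (weightDeriv ψ P) = Finsupp.weight ψ d * coeff d P := by
  classical
  induction P using MvPolynomial.induction_on' with
  | monomial e r =>
    rw [weightDeriv_monomial, coeff_smul, coeff_monomial, smul_eq_mul]
    split_ifs with h
    · rw [h]
    · simp
  | add P Q hP hQ => rw [map_add, coeff_add, hP, hQ, coeff_add, mul_add]

/-- No multiple `K * η` with `1 ≤ K ≤ J ≤ N` is a sum of `J` entries of `ψ`. -/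
def NonResonant {κ : Type*} (η : ℝ) (N : ℕ) (ψ : κ → ℝ) : Prop :=
  ∀ K J : ℕ, 1 ≤ K → K ≤ J → J ≤ N → ∀ m : Fin J → κ, (K : ℝ) * η ≠ ∑ i, ψ (m i)

lemma NonResonant.comp {κ κ' : Type*} {η : ℝ} {N : ℕ} {ψ : κ → ℝ} (hψ : NonResonant η N ψ)
    (m : κ' → κ) : NonResonant η N (ψ ∘ m) :=
  fun K J hK hKJ hJ l => hψ K J hK hKJ hJ (m ∘ l)

lemma NonResonant.eq_zero_of_weightDeriv_eq {η : ℝ} {N : ℕ} {ψ : ι → ℝ}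
    (hψ : NonResonant η N ψ) {K J : ℕ} (hK : 1 ≤ K) (hKJ : K ≤ J) (hJ : J ≤ N)
    {P : MvPolynomial ι ℝ} (hP : P.IsHomogeneous J) (h : weightDeriv ψ P = (K * η) • P) :
    P = 0 := by
  ext d
  rw [coeff_zero]
  by_contra hd
  obtain rfl : d.degree = J := not_not.mp fun hdeg => hd (hP.coeff_eq_zero hdeg)
  obtain ⟨m, hm⟩ := exists_content_eq d
  have eigen := congrArg (coeff d) h
  rw [coeff_weightDeriv, coeff_smul, smul_eq_mul] at eigen
  refine hψ K d.degree hK hKJ hJ m ?_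
  rw [← mul_right_cancel₀ hd eigen, ← weight_content, hm]

end WeightDerivation

section Words

variable {ι : Type*} [Fintype ι]

/-- The generating polynomial of the values of a function of `J` variables along the words of
length `J` in the entries of `ψ`. -/
noncomputable def genPoly (ψ : ι → ℝ) (J : ℕ) : ((ℕ → ℝ) → ℝ) →ₗ[ℝ] MvPolynomial ι ℝ :=
  ∑ m : Fin J → ι, monomial (content m) ∘ₗ LinearMap.proj (zeroExtend (ψ ∘ m))

lemma genPoly_apply (ψ : ι → ℝ) (J : ℕ) (p : (ℕ → ℝ) → ℝ) :
    genPoly ψ J p = ∑ m : Fin J → ι, monomial (content m) (p (zeroExtend (ψ ∘ m))) := by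
  simp [genPoly]

lemma genPoly_congr {ψ : ι → ℝ} {J : ℕ} {p q : (ℕ → ℝ) → ℝ}
    (h : ∀ m : Fin J → ι, p (zeroExtend (ψ ∘ m)) = q (zeroExtend (ψ ∘ m))) :
    genPoly ψ J p = genPoly ψ J q := by
  simp only [genPoly_apply, h]

lemma genPoly_comp_neg (ψ : ι → ℝ) (J : ℕ) (p : (ℕ → ℝ) → ℝ) :
    genPoly ψ J (fun w => p (-w)) = genPoly (-ψ) J p := by
  simp only [genPoly_apply, ← zeroExtend_neg]
  rfl

lemma genPoly_symmetrize (ψ : ι → ℝ) (J : ℕ) (p : (ℕ → ℝ) → ℝ) :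
    genPoly ψ J (symmetrize J p) = genPoly ψ J p := by
  have invariant (σ : Equiv.Perm (Fin J)) :
      genPoly ψ J (LinearMap.funLeft ℝ ℝ (permuteFirst σ) p) = genPoly ψ J p := by
    simp only [genPoly_apply, LinearMap.funLeft_apply, permuteFirst_zeroExtend]
    refine Fintype.sum_equiv (Equiv.arrowCongr σ.symm (Equiv.refl _)) _ _ fun m => ?_
    rw [← content_comp_perm m σ]
    rfl
  simp only [symmetrize, LinearMap.smul_apply, LinearMap.sum_apply, map_smul, map_sum, invariant,
    Finset.sum_const, Finset.card_univ, Fintype.card_perm, Fintype.card_fin]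
  rw [← Nat.cast_smul_eq_nsmul ℝ, inv_smul_smul₀ (by positivity)]

lemma genPoly_mul (ψ : ι → ℝ) (I J : ℕ) {p : (ℕ → ℝ) → ℝ} (hp : DependsOn p (Set.Iio I))
    (q : (ℕ → ℝ) → ℝ) :
    genPoly ψ (I + J) (fun w => p w * q fun i => w (i + I)) = genPoly ψ I p * genPoly ψ J q := by
  simp only [genPoly_apply]
  rw [Finset.sum_mul_sum, ← Fintype.sum_prod_type']
  refine (Fintype.sum_equiv (Fin.appendEquiv I J) _ _ fun ⟨m, n⟩ => ?_).symm
  have append_comp : ψ ∘ Fin.append m n = Fin.append (ψ ∘ m) (ψ ∘ n) := by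
    funext i
    refine Fin.addCases (fun i => ?_) (fun i => ?_) i <;> simp
  have left : p (zeroExtend (ψ ∘ Fin.append m n)) = p (zeroExtend (ψ ∘ m)) := by
    refine hp fun i (hi : i < I) => ?_
    rw [zeroExtend_of_lt _ hi, zeroExtend_of_lt _ (by omega)]
    exact congrArg ψ (Fin.append_left m n ⟨i, hi⟩)
  change _ = monomial (content (Fin.append m n)) (p (zeroExtend (ψ ∘ Fin.append m n)) *
    q fun i => zeroExtend (ψ ∘ Fin.append m n) (i + I))
  rw [content_append, left, append_comp]
  simp only [zeroExtend_append, monomial_mul]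

lemma genPoly_symProd (ψ : ι → ℝ) (I L : ℕ) {p q : ℝ → (ℕ → ℝ) → ℝ} {η : ℝ}
    (hp : DependsOn (p η) (Set.Iio I)) :
    genPoly ψ (I + L) (symProd I L p q η) = genPoly ψ I (p η) * genPoly ψ L (q η) := by
  rw [symProd_eq_symmetrize, genPoly_symmetrize, genPoly_mul ψ I L hp]

lemma genPoly_one_const (ψ : ι → ℝ) (r : ℝ) : genPoly ψ 1 (fun _ => r) = r • ∑ i, X i := by
  rw [genPoly_apply, Finset.smul_sum]
  refine Fintype.sum_equiv (Equiv.funUnique (Fin 1) ι) _ _ fun m => ?_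
  simp [content, X, smul_monomial]

lemma genPoly_succ (ψ : ι → ℝ) (J : ℕ) {p : (ℕ → ℝ) → ℝ} (hp : DependsOn p (Set.Iio J)) :
    genPoly ψ (J + 1) p = genPoly ψ J p * ∑ i, X i := by
  simpa [genPoly_one_const] using genPoly_mul ψ J 1 hp fun _ => 1

lemma isHomogeneous_genPoly (ψ : ι → ℝ) (J : ℕ) (p : (ℕ → ℝ) → ℝ) :
    (genPoly ψ J p).IsHomogeneous J := by
  rw [genPoly_apply]
  exact IsHomogeneous.sum _ _ _ fun m _ => isHomogeneous_monomial _ (degree_content m)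

lemma coeff_content_id_genPoly {J : ℕ} (ψ : Fin J → ℝ) (p : (ℕ → ℝ) → ℝ) :
    coeff (content id) (genPoly ψ J p) = J.factorial * symmetrize J p (zeroExtend ψ) := by
  simp only [genPoly_apply, coeff_sum, coeff_monomial, content_eq_content_id_iff, symmetrize_apply,
    permuteFirst_zeroExtend]
  rw [mul_inv_cancel_left₀ (by positivity), ← Finset.sum_filter]
  symm
  exact Finset.sum_bij (fun σ _ => σ)
    (fun σ _ => Finset.mem_filter.mpr ⟨Finset.mem_univ _, σ.bijective⟩)
    (fun _ _ _ _ h => DFunLike.coe_injective h)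
    (fun m hm => ⟨Equiv.ofBijective m (Finset.mem_filter.mp hm).2, Finset.mem_univ _, rfl⟩)
    fun _ _ => rfl

lemma symmetrize_eq_of_genPoly_eq {J : ℕ} {ψ : Fin J → ℝ} {p q : (ℕ → ℝ) → ℝ}
    (h : genPoly ψ J p = genPoly ψ J q) :
    symmetrize J p (zeroExtend ψ) = symmetrize J q (zeroExtend ψ) := by
  have := congrArg (coeff (content id)) h
  rwa [coeff_content_id_genPoly, coeff_content_id_genPoly,
    mul_right_inj' (Nat.cast_ne_zero.mpr J.factorial_ne_zero)] at this

lemma weightDeriv_genPoly (ψ : ι → ℝ) (J : ℕ) (p : (ℕ → ℝ) → ℝ) :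
    weightDeriv ψ (genPoly ψ J p) = genPoly ψ J (fun w => (∑ i ∈ Finset.range J, w i) * p w) := by
  simp only [genPoly_apply, map_sum, weightDeriv_monomial, weight_content, sum_range_zeroExtend,
    Function.comp_apply, smul_monomial, smul_eq_mul]

end Words

end GeneratingPolynomials

/-! ### The Riccati equation -/

section Riccati

variable {B : Type*} [CommRing B]

lemma deriv_pow_of_riccati {R : Type*} [CommRing R] [Algebra R B] (E : Derivation R B B)
    {t e M U : B} (hU : t ∣ E U - (e * U + M * (1 - U) ^ 2)) (K : ℕ) :
    t ∣ E (U ^ (K + 1)) -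
      (K + 1) * (e * U ^ (K + 1) + M * (U ^ K - 2 * U ^ (K + 1) + U ^ (K + 2))) := by
  convert hU.mul_left ((K + 1) * U ^ K) using 1
  rw [E.leibniz_pow, Nat.add_sub_cancel, nsmul_eq_mul, smul_eq_mul]
  push_cast
  ring

lemma deriv_mul_of_riccati {R : Type*} [CommRing R] [Algebra R B] (E : Derivation R B B)
    {t e M U V : B} (hU : t ∣ E U - (e * U + M * (1 - U) ^ 2))
    (hV : t ∣ (-E) V - (e * V + M * (1 - V) ^ 2)) :
    t ∣ E (U * V) - M * (V - U) * (1 - U * V) := by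
  convert (hU.mul_left V).sub (hV.mul_left U) using 1
  rw [E.leibniz, smul_eq_mul, smul_eq_mul, Derivation.neg_apply]
  ring

variable [Algebra ℝ B] (E : Derivation ℝ B B)

lemma deriv_sum_pow_div (a : B) (N : ℕ) :
    E (∑ k ∈ Finset.range N, ((k : ℝ) + 1)⁻¹ • a ^ (k + 1)) =
      (∑ k ∈ Finset.range N, a ^ k) * E a := by
  rw [map_sum, Finset.sum_mul]
  refine Finset.sum_congr rfl fun k _ => ?_
  rw [E.map_smul, E.leibniz_pow, Nat.add_sub_cancel, ← Nat.cast_smul_eq_nsmul ℝ, Nat.cast_add_one,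
    inv_smul_smul₀ (by positivity), smul_eq_mul]

/-- The truncated series of `-log (1 - U * V)`, whose derivative telescopes. -/
lemma deriv_sum_pow_div_of_riccati {t e M U V : B} (hU : t ∣ E U - (e * U + M * (1 - U) ^ 2))
    (hV : t ∣ (-E) V - (e * V + M * (1 - V) ^ 2)) (N : ℕ) :
    t ∣ E (∑ k ∈ Finset.range N, ((k : ℝ) + 1)⁻¹ • (U * V) ^ (k + 1)) -
      M * (V - U) * (1 - (U * V) ^ N) := by
  rw [deriv_sum_pow_div]
  convert (deriv_mul_of_riccati E hU hV).mul_left (∑ k ∈ Finset.range N, (U * V) ^ k) using 1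
  linear_combination (M * (V - U)) * geom_sum_mul_neg (U * V) N

end Riccati

/-! ### Generating series -/

section GeneratingSeries

open Finset.HasAntidiagonal (antidiagonal mem_antidiagonal)
open PowerSeries

/-- The coefficientwise extension of a derivation to power series. -/
noncomputable def coeffDeriv {R A : Type*} [CommRing R] [CommRing A] [Algebra R A]
    (D : Derivation R A A) : Derivation R A⟦X⟧ A⟦X⟧ :=
  Derivation.mk'
    { toFun := fun S => PowerSeries.mk fun j => D (coeff j S)
      map_add' := fun S T => by ext j; simp
      map_smul' := fun r S => by ext j; simp }
    fun S T => by
      ext j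
      simp only [LinearMap.coe_mk, AddHom.coe_mk, coeff_mk, smul_eq_mul, mul_comm T, map_add,
        coeff_mul, map_sum, D.leibniz, Finset.sum_add_distrib, mul_comm (coeff _ T)]

lemma coeff_coeffDeriv {R A : Type*} [CommRing R] [CommRing A] [Algebra R A]
    (D : Derivation R A A) (j : ℕ) (S : A⟦X⟧) : coeff j (coeffDeriv D S) = D (coeff j S) := by
  simp [coeffDeriv]

lemma coeffDeriv_neg {R A : Type*} [CommRing R] [CommRing A] [Algebra R A]
    (D : Derivation R A A) : coeffDeriv (-D) = -coeffDeriv D := by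
  ext S j
  simp [coeff_coeffDeriv]

variable {ι : Type*}

/-- The ring of power series whose coefficient of degree `j` is homogeneous of degree `j`. -/
def gradedSeries (ι : Type*) : Subring (MvPolynomial ι ℝ)⟦X⟧ where
  carrier := {S | ∀ j, (coeff j S).IsHomogeneous j}
  zero_mem' j := by simpa using MvPolynomial.isHomogeneous_zero ι ℝ j
  one_mem' j := by
    rw [coeff_one]
    split_ifs with h
    · exact h ▸ MvPolynomial.isHomogeneous_one ι ℝ
    · exact MvPolynomial.isHomogeneous_zero ι ℝ j
  add_mem' hS hT j := by simpa using (hS j).add (hT j)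
  neg_mem' hS j := by simpa using (hS j).neg
  mul_mem' hS hT j := by
    rw [coeff_mul]
    exact MvPolynomial.IsHomogeneous.sum _ _ _ fun x hx =>
      mem_antidiagonal.mp hx ▸ (hS x.1).mul (hT x.2)

variable [Fintype ι]

/-- The linear form which generates the constant function `η⁻¹` of one variable. -/
noncomputable def letterForm (ι : Type*) [Fintype ι] (η : ℝ) : MvPolynomial ι ℝ :=
  η⁻¹ • ∑ i, MvPolynomial.X i

/-- The generating series of the functions `g_{J,K}`. Its constant coefficient, `2` for `K = 0`, is
chosen so that the recursion for `f_{J,K}` also holds for `J = 1`. -/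
noncomputable def gSeries (ψ : ι → ℝ) (η : ℝ) (K : ℕ) : (MvPolynomial ι ℝ)⟦X⟧ :=
  PowerSeries.mk fun
    | 0 => if K = 0 then 2 else 0
    | J + 1 => genPoly ψ (J + 1) (gAux (J + 1) K η)

/-- The generating series of the functions `η ^ (-J) * h_J`. -/
noncomputable def hSeries (ψ : ι → ℝ) (η : ℝ) : (MvPolynomial ι ℝ)⟦X⟧ :=
  PowerSeries.mk fun J => (η⁻¹ ^ J) • genPoly ψ J (hFun J η)

lemma coeff_zero_gSeries (ψ : ι → ℝ) (η : ℝ) (K : ℕ) :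
    coeff 0 (gSeries ψ η K) = if K = 0 then 2 else 0 := coeff_mk _ _

lemma coeff_succ_gSeries (ψ : ι → ℝ) (η : ℝ) (K J : ℕ) :
    coeff (J + 1) (gSeries ψ η K) = genPoly ψ (J + 1) (gAux (J + 1) K η) := coeff_mk _ _

lemma coeff_hSeries (ψ : ι → ℝ) (η : ℝ) (J : ℕ) :
    coeff J (hSeries ψ η) = (η⁻¹ ^ J) • genPoly ψ J (hFun J η) := coeff_mk _ _

lemma coeff_zero_hSeries (ψ : ι → ℝ) (η : ℝ) : coeff 0 (hSeries ψ η) = 1 := by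
  simp [coeff_hSeries, genPoly_apply, hFun, content]

lemma X_dvd_one_sub_hSeries (ψ : ι → ℝ) (η : ℝ) : X ∣ 1 - hSeries ψ η := by
  rw [X_dvd_iff, ← coeff_zero_eq_constantCoeff_apply, map_sub, coeff_zero_hSeries, coeff_zero_one,
    sub_self]

lemma coeff_gSeries_of_eq_zero_or_lt (ψ : ι → ℝ) (η : ℝ) {J K : ℕ} (h : K = 0 ∨ J < K) :
    coeff J (gSeries ψ η K) = if J = 0 ∧ K = 0 then 2 else 0 := by
  rcases J with _ | J
  · simp [coeff_zero_gSeries]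
  · rw [coeff_succ_gSeries, gAux_eq_zero _ _ (by omega), map_zero, if_neg (by simp)]

lemma gSeries_mem_gradedSeries (ψ : ι → ℝ) (η : ℝ) (K : ℕ) :
    gSeries ψ η K ∈ gradedSeries ι := by
  rintro (_ | J)
  · rw [coeff_zero_gSeries]
    split_ifs
    · exact MvPolynomial.isHomogeneous_C ι (2 : ℝ)
    · exact MvPolynomial.isHomogeneous_zero ι ℝ 0
  · rw [coeff_succ_gSeries]
    exact isHomogeneous_genPoly ψ _ _

lemma hSeries_mem_gradedSeries (ψ : ι → ℝ) (η : ℝ) : hSeries ψ η ∈ gradedSeries ι := by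
  intro J
  rw [coeff_hSeries, ← map_smul]
  exact isHomogeneous_genPoly ψ J _

lemma two_smul_genPoly_fAux_add_two (ψ : ι → ℝ) (η : ℝ) (J : ℕ) (K : ℤ) :
    (2 : ℝ) • genPoly ψ (J + 2) (fAux (J + 2) K η) =
      letterForm ι η * (genPoly ψ (J + 1) (gAux (J + 1) (K - 1) η) -
        2 • genPoly ψ (J + 1) (gAux (J + 1) K η) +
          genPoly ψ (J + 1) (gAux (J + 1) (K + 1) η)) := by
  have succ (L : ℤ) := genPoly_succ ψ (J + 1) (dependsOn_gAux (J + 1) L η)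
  rw [fAux_add_two, map_smul, genPoly_symmetrize, smul_smul, mul_div_cancel₀ _ two_ne_zero,
    map_add, map_sub, map_smul, succ, succ, succ, letterForm, ← Nat.cast_smul_eq_nsmul ℝ,
    Nat.cast_ofNat]
  simp only [Algebra.smul_def]
  ring

lemma two_smul_genPoly_fAux_zero (ψ : ι → ℝ) (η : ℝ) (J : ℕ) :
    (2 : ℝ) • genPoly ψ (J + 2) (fAux (J + 2) 0 η) =
      letterForm ι η * coeff (J + 1) (gSeries ψ η 1) := by
  rw [two_smul_genPoly_fAux_add_two, gAux_eq_zero _ _ (Or.inl (by norm_num)),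
    gAux_eq_zero _ _ (Or.inl le_rfl), map_zero, smul_zero, sub_zero, zero_add, zero_add,
    coeff_succ_gSeries, Nat.cast_one]

lemma two_smul_genPoly_fAux_succ (ψ : ι → ℝ) (η : ℝ) (J K : ℕ) :
    (2 : ℝ) • genPoly ψ (J + 1) (fAux (J + 1) (K + 1 : ℕ) η) = letterForm ι η *
      coeff J (gSeries ψ η K - 2 • gSeries ψ η (K + 1) + gSeries ψ η (K + 2)) := by
  match J with
  | 0 =>
    have constant : fAux (0 + 1) (K + 1 : ℕ) η = fun _ => if K = 0 then η⁻¹ else 0 := by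
      funext w
      rw [fAux, if_neg (by omega)]
      simp
    rw [constant, genPoly_one_const, letterForm]
    simp only [map_add, map_sub, map_nsmul, coeff_zero_gSeries, Nat.add_eq_zero_iff, and_false,
      one_ne_zero, OfNat.ofNat_ne_zero, if_false]
    split_ifs
    · simp [two_smul, mul_two]
    · simp
  | J + 1 =>
    have pred : ((K + 1 : ℕ) : ℤ) - 1 = K := by push_cast; ring
    have succ : ((K + 1 : ℕ) : ℤ) + 1 = (K + 2 : ℕ) := by push_cast; ring
    rw [two_smul_genPoly_fAux_add_two, pred, succ]
    simp only [map_add, map_sub, map_nsmul, coeff_succ_gSeries]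

section Nonresonant

variable {ψ : ι → ℝ} {η : ℝ} {N : ℕ}

lemma weightDeriv_genPoly_gAux (hψ : NonResonant η N ψ) {J K : ℕ} (hK : 1 ≤ K) (hJ : J ≤ N) :
    weightDeriv ψ (genPoly ψ J (gAux J K η)) =
      (K * η) • genPoly ψ J (gAux J K η) + (2 * K : ℝ) • genPoly ψ J (fAux J K η) := by
  rcases lt_or_ge J K with hJK | hKJ
  · rw [gAux_eq_zero J η (Or.inr (mod_cast hJK)), fAux_eq_zero J η (Or.inr (mod_cast hJK))]
    simp
  rw [weightDeriv_genPoly, ← map_smul, ← map_smul, ← map_add]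
  refine genPoly_congr fun m => ?_
  have denominator : (K : ℝ) * η - ∑ i, ψ (m i) ≠ 0 := sub_ne_zero.mpr (hψ K J hK hKJ hJ m)
  simp only [Pi.add_apply, Pi.smul_apply, smul_eq_mul, gAux, sum_range_zeroExtend,
    Function.comp_apply, Int.cast_natCast]
  field_simp
  ring

lemma coeff_coeffDeriv_gSeries (hψ : NonResonant η N ψ) {J : ℕ} (hJ : J + 1 ≤ N) (K : ℕ) :
    coeff (J + 1) (coeffDeriv (weightDeriv ψ) (gSeries ψ η (K + 1))) =
      ((K + 1 : ℕ) * η) • coeff (J + 1) (gSeries ψ η (K + 1)) + (K + 1) • (letterForm ι η *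
        coeff J (gSeries ψ η K - 2 • gSeries ψ η (K + 1) + gSeries ψ η (K + 2))) := by
  rw [coeff_coeffDeriv, coeff_succ_gSeries, weightDeriv_genPoly_gAux hψ (Nat.le_add_left 1 K) hJ,
    ← two_smul_genPoly_fAux_succ, ← Nat.cast_smul_eq_nsmul ℝ, smul_smul, mul_comm (2 : ℝ)]

lemma weightDeriv_genPoly_hFun_succ (hψ : NonResonant η N ψ) {J : ℕ} (hJ : J + 1 ≤ N) :
    weightDeriv ψ (genPoly ψ (J + 1) (hFun (J + 1) η)) =
      η • genPoly ψ (J + 1) (hFun (J + 1) η) - (∑ x ∈ antidiagonal J,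
        genPoly ψ x.1 (hFun x.1 η) * genPoly ψ x.2 (hFun x.2 η)) * ∑ i, MvPolynomial.X i := by
  have convolution : ∀ x ∈ antidiagonal J,
      genPoly ψ x.1 (hFun x.1 η) * genPoly ψ x.2 (hFun x.2 η) * ∑ i, MvPolynomial.X i =
        genPoly ψ (J + 1) fun w => hFun x.1 η w * hFun x.2 η fun i => w (i + x.1) := by
    intro x hx
    obtain rfl : x.1 + x.2 = J := mem_antidiagonal.mp hx
    rw [mul_assoc, ← genPoly_succ ψ x.2 (dependsOn_hFun x.2 η),
      ← genPoly_mul ψ x.1 (x.2 + 1) (dependsOn_hFun x.1 η), add_assoc]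
  rw [weightDeriv_genPoly, Finset.sum_mul, Finset.sum_congr rfl convolution, ← map_sum, ← map_smul,
    ← map_sub]
  refine genPoly_congr fun m => ?_
  have denominator : η - ∑ i, ψ (m i) ≠ 0 :=
    sub_ne_zero.mpr (by simpa using hψ 1 (J + 1) le_rfl (Nat.le_add_left 1 J) hJ m)
  simp only [Pi.sub_apply, Pi.smul_apply, Finset.sum_apply, smul_eq_mul, hFun_succ,
    sum_range_zeroExtend, Function.comp_apply]
  field_simp
  ring

lemma coeff_coeffDeriv_hSeries (hψ : NonResonant η N ψ) {J : ℕ} (hJ : J + 1 ≤ N) :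
    coeff (J + 1) (coeffDeriv (weightDeriv ψ) (hSeries ψ η)) =
      η • coeff (J + 1) (hSeries ψ η) - letterForm ι η * coeff J (hSeries ψ η ^ 2) := by
  have square : coeff J (hSeries ψ η ^ 2) = η⁻¹ ^ J • ∑ x ∈ antidiagonal J,
      genPoly ψ x.1 (hFun x.1 η) * genPoly ψ x.2 (hFun x.2 η) := by
    rw [sq, coeff_mul, Finset.smul_sum]
    refine Finset.sum_congr rfl fun x hx => ?_
    rw [coeff_hSeries, coeff_hSeries, smul_mul_smul_comm, ← pow_add, mem_antidiagonal.mp hx]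
  rw [coeff_coeffDeriv, square, coeff_hSeries, Derivation.map_smul,
    weightDeriv_genPoly_hFun_succ hψ hJ, letterForm, pow_succ]
  simp only [Algebra.smul_def, map_mul]
  ring

/-- The recursion for `h` is a Riccati equation, `D H = η (H - 1) - X L H²`. -/
lemma X_pow_dvd_riccati (hψ : NonResonant η N ψ) :
    X ^ (N + 1) ∣ coeffDeriv (weightDeriv ψ) (1 - hSeries ψ η) - (algebraMap ℝ _ η *
      (1 - hSeries ψ η) + X * C (letterForm ι η) * (1 - (1 - hSeries ψ η)) ^ 2) := by
  rw [X_pow_dvd_iff, sub_sub_cancel, ← Algebra.smul_def, mul_assoc, map_sub,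
    Derivation.map_one_eq_zero, zero_sub]
  rintro (_ | J) hJ
  · simp only [map_sub, map_neg, map_add, coeff_zero_X_mul, coeff_smul, coeff_coeffDeriv,
      coeff_zero_hSeries, coeff_zero_one, Derivation.map_one_eq_zero, sub_self, smul_zero, neg_zero,
      add_zero]
  · simp only [map_sub, map_neg, map_add, coeff_succ_X_mul, coeff_smul, coeff_C_mul,
      coeff_coeffDeriv_hSeries hψ (Nat.lt_succ_iff.mp hJ), coeff_one, Nat.add_eq_zero_iff,
      one_ne_zero, and_false, if_false, zero_sub, smul_neg]
    ring

lemma coeff_coeffDeriv_pow (hψ : NonResonant η N ψ) {J : ℕ} (hJ : J + 1 ≤ N) (K : ℕ) :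
    coeff (J + 1) (coeffDeriv (weightDeriv ψ) ((1 - hSeries ψ η) ^ (K + 1))) =
      ((K + 1 : ℕ) * η) • coeff (J + 1) ((1 - hSeries ψ η) ^ (K + 1)) +
        (K + 1) • (letterForm ι η * coeff J ((1 - hSeries ψ η) ^ K -
          2 • (1 - hSeries ψ η) ^ (K + 1) + (1 - hSeries ψ η) ^ (K + 2))) := by
  have congruence := X_pow_dvd_iff.mp
    (deriv_pow_of_riccati _ (X_pow_dvd_riccati hψ) K) (J + 1) (Nat.lt_succ_of_le hJ)
  rw [map_sub, sub_eq_zero] at congruence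
  rw [congruence, ← Nat.cast_add_one, ← nsmul_eq_mul, ← Algebra.smul_def, mul_assoc, map_nsmul,
    map_add, coeff_smul, coeff_succ_X_mul, coeff_C_mul, smul_add, ← Nat.cast_smul_eq_nsmul ℝ,
    smul_smul, two_nsmul, two_mul]

lemma coeff_eq_zero_of_recursion (hψ : NonResonant η N ψ) {Δ : ℕ → (MvPolynomial ι ℝ)⟦X⟧}
    (graded : ∀ K, Δ K ∈ gradedSeries ι) (vanish : ∀ J K, K = 0 ∨ J < K → coeff J (Δ K) = 0)
    (recursion : ∀ J K, J + 1 ≤ N → coeff (J + 1) (coeffDeriv (weightDeriv ψ) (Δ (K + 1))) =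
      ((K + 1 : ℕ) * η) • coeff (J + 1) (Δ (K + 1)) +
        (K + 1) • (letterForm ι η * coeff J (Δ K - 2 • Δ (K + 1) + Δ (K + 2))))
    {J : ℕ} (hJ : J ≤ N) (K : ℕ) : coeff J (Δ K) = 0 := by
  induction J generalizing K with
  | zero => exact vanish 0 K (Nat.eq_zero_or_pos K)
  | succ J ih =>
    by_cases hK : K = 0 ∨ J + 1 < K
    · exact vanish _ _ hK
    obtain ⟨K, rfl⟩ := Nat.exists_eq_add_one_of_ne_zero (n := K) (by omega)
    refine hψ.eq_zero_of_weightDeriv_eq (Nat.le_add_left 1 K) (by omega) hJ (graded _ _) ?_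
    rw [← coeff_coeffDeriv, recursion J K hJ, map_add, map_sub, map_nsmul, ih (by omega),
      ih (by omega), ih (by omega), smul_zero, sub_zero, add_zero, mul_zero, smul_zero, add_zero]

/-- Both sides solve the same triangular linear system, whose solution is unique by
non-resonance. -/
lemma coeff_gSeries (hψ : NonResonant η N ψ) {J : ℕ} (hJ : J ≤ N) (K : ℕ) :
    coeff J (gSeries ψ η K) = coeff J (2 • (1 - hSeries ψ η) ^ K) := by
  rw [← sub_eq_zero, ← map_sub]
  refine coeff_eq_zero_of_recursion hψ
    (Δ := fun K => gSeries ψ η K - 2 • (1 - hSeries ψ η) ^ K) (fun K => ?_) (fun J K hK => ?_)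
    (fun J K hJ => ?_) hJ K
  · exact sub_mem (gSeries_mem_gradedSeries ψ η K) (nsmul_mem
      (pow_mem (sub_mem (one_mem _) (hSeries_mem_gradedSeries ψ η)) K) 2)
  · rw [map_sub, map_nsmul, coeff_gSeries_of_eq_zero_or_lt ψ η hK]
    rcases hK with rfl | hK
    · by_cases hJ : J = 0 <;> simp [coeff_one, hJ]
    · rw [X_pow_dvd_iff.mp (pow_dvd_pow_of_dvd (X_dvd_one_sub_hSeries ψ η) K) J hK,
        if_neg (by omega), smul_zero, sub_zero]
  · simp only [map_sub, map_add, map_nsmul, coeff_coeffDeriv_gSeries hψ hJ,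
      coeff_coeffDeriv_pow hψ hJ]
    simp only [nsmul_eq_mul]
    simp only [Algebra.smul_def]
    ring

lemma genPoly_fAux_zero (hψ : NonResonant η N ψ) {J : ℕ} (hJ : J + 1 ≤ N) :
    genPoly ψ (J + 2) (fAux (J + 2) 0 η) = -(letterForm ι η * coeff (J + 1) (hSeries ψ η)) := by
  apply smul_right_injective _ (two_ne_zero (α := ℝ))
  simp only
  rw [two_smul_genPoly_fAux_zero, coeff_gSeries hψ hJ, pow_one, map_nsmul, map_sub, coeff_one,
    if_neg (Nat.succ_ne_zero J), zero_sub, two_smul, two_smul]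
  ring

end Nonresonant

lemma sum_Icc_sum_Icc_eq_sum_range_sum_antidiagonal {M : Type*} [AddCommMonoid M]
    {F : ℕ → ℕ → ℕ → M} (hF : ∀ k i j, i < k ∨ j < k → F k i j = 0) (J : ℕ) :
    ∑ j ∈ Finset.Icc 1 (J - 1), ∑ k ∈ Finset.Icc 1 (min j (J - j)), F k j (J - j) =
      ∑ k ∈ Finset.range J, ∑ x ∈ antidiagonal J, F (k + 1) x.1 x.2 := by
  have shift : ∑ k ∈ Finset.range J, ∑ x ∈ antidiagonal J, F (k + 1) x.1 x.2 =
      ∑ k ∈ Finset.Icc 1 J, ∑ x ∈ antidiagonal J, F k x.1 x.2 := by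
    rw [Finset.range_eq_Ico, Finset.sum_Ico_add' (fun k => ∑ x ∈ antidiagonal J, F k x.1 x.2),
      zero_add, Finset.Ico_add_one_right_eq_Icc]
  rw [shift, Finset.sum_comm, Finset.Nat.sum_antidiagonal_eq_sum_range_succ_mk]
  refine (Finset.sum_congr rfl fun j hj => ?_).trans
    (Finset.sum_subset (s₂ := Finset.range (J + 1)) (fun j hj => ?_) fun j hj hj' => ?_)
  · refine Finset.sum_subset (fun k hk => ?_) fun k hk hk' => hF _ _ _ ?_
    all_goals simp only [Finset.mem_Icc] at *; omega
  · simp only [Finset.mem_Icc, Finset.mem_range] at *; omega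
  · refine Finset.sum_eq_zero fun k hk => hF _ _ _ ?_
    simp only [Finset.mem_Icc, Finset.mem_range] at *; omega

lemma genPoly_symProd_gAux (ψ : ι → ℝ) (η : ℝ) {j J : ℕ} (hj : 1 ≤ j) (hjJ : j < J) (k : ℕ) :
    genPoly ψ J (symProd j (J - j) (gAux j k) (fun η w => gAux (J - j) k η (-w)) η) =
      coeff j (gSeries ψ η k) * coeff (J - j) (gSeries (-ψ) η k) := by
  have split : j + (J - j) = J := Nat.add_sub_cancel' hjJ.le
  have product := genPoly_symProd ψ j (J - j) (q := fun η w => gAux (J - j) k η (-w))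
    (dependsOn_gAux j k η)
  rw [split, genPoly_comp_neg] at product
  obtain ⟨i, rfl⟩ := Nat.exists_eq_add_of_le' hj
  obtain ⟨l, hl⟩ := Nat.exists_eq_add_of_le' (Nat.sub_pos_of_lt hjJ)
  rw [product, hl, coeff_succ_gSeries, coeff_succ_gSeries]

lemma genPoly_GFun (ψ : ι → ℝ) (η : ℝ) (J : ℕ) :
    genPoly ψ J (GFun J η) = coeff J (∑ k ∈ Finset.range J,
      (4 * ((k : ℝ) + 1))⁻¹ • (gSeries ψ η (k + 1) * gSeries (-ψ) η (k + 1))) := by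
  have vanish (k i j : ℕ) (h : i < k ∨ j < k) :
      (4 * (k : ℝ))⁻¹ • (coeff i (gSeries ψ η k) * coeff j (gSeries (-ψ) η k)) = 0 := by
    rcases h with h | h <;>
      rw [coeff_gSeries_of_eq_zero_or_lt _ η (Or.inr h), if_neg (by omega)] <;> simp
  have reindex := sum_Icc_sum_Icc_eq_sum_range_sum_antidiagonal vanish J
  simp only [Nat.cast_add_one] at reindex
  simp only [GFun_eq_sum, map_sum, map_smul, coeff_smul, coeff_mul, Finset.smul_sum]
  rw [← reindex]
  refine Finset.sum_congr rfl fun j hj => Finset.sum_congr rfl fun k _ => ?_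
  rw [Finset.mem_Icc] at hj
  rw [genPoly_symProd_gAux ψ η hj.1 (by omega)]

lemma coeff_mul_congr {A : Type*} [CommRing A] {S S' T T' : A⟦X⟧} {J : ℕ}
    (hS : ∀ j ≤ J, coeff j S = coeff j S') (hT : ∀ j ≤ J, coeff j T = coeff j T') :
    coeff J (S * T) = coeff J (S' * T') := by
  rw [coeff_mul, coeff_mul]
  refine Finset.sum_congr rfl fun x hx => ?_
  have hx : x.1 + x.2 = J := mem_antidiagonal.mp hx
  rw [hS x.1 (by omega), hT x.2 (by omega)]

section Nonresonant

variable {ψ : ι → ℝ} {η : ℝ} {N : ℕ}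

lemma genPoly_GFun_eq_coeff_log (hψ : NonResonant η N ψ) (hψ' : NonResonant η N (-ψ)) {J : ℕ}
    (hJ : J ≤ N) : genPoly ψ J (GFun J η) = coeff J (∑ k ∈ Finset.range J,
      ((k : ℝ) + 1)⁻¹ • ((1 - hSeries ψ η) * (1 - hSeries (-ψ) η)) ^ (k + 1)) := by
  simp only [genPoly_GFun, map_sum, coeff_smul]
  refine Finset.sum_congr rfl fun k _ => ?_
  rw [coeff_mul_congr (fun j hj => coeff_gSeries hψ (hj.trans hJ) (k + 1))
    fun j hj => coeff_gSeries hψ' (hj.trans hJ) (k + 1), smul_mul_smul_comm, ← mul_pow, map_nsmul,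
    ← Nat.cast_smul_eq_nsmul ℝ, smul_smul]
  congr 1
  push_cast
  field_simp

/-- Weighting `𝒢` by the sum of the frequencies turns it into a difference of values of `f`:
`𝒢` is generated by `-log (1 - U Ŭ)`, where `U = 1 - H`, and `D (U Ŭ) = X L (Ŭ - U) (1 - U Ŭ)` by
the Riccati equation. -/
lemma weightDeriv_genPoly_GFun (hψ : NonResonant η N ψ) (hψ' : NonResonant η N (-ψ)) {J : ℕ}
    (hJ : J + 2 ≤ N) : weightDeriv ψ (genPoly ψ (J + 2) (GFun (J + 2) η)) =
      genPoly (-ψ) (J + 2) (fAux (J + 2) 0 η) - genPoly ψ (J + 2) (fAux (J + 2) 0 η) := by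
  have riccati := X_pow_dvd_riccati hψ'
  rw [weightDeriv_neg, coeffDeriv_neg] at riccati
  have log_deriv := X_pow_dvd_iff.mp
    (deriv_sum_pow_div_of_riccati _ (X_pow_dvd_riccati hψ) riccati (J + 2)) (J + 2) (by omega)
  have tail : ∀ j ≤ J + 1, coeff j (1 - ((1 - hSeries ψ η) * (1 - hSeries (-ψ) η)) ^ (J + 2)) =
      coeff j 1 := fun j hj => by
    rw [map_sub, X_pow_dvd_iff.mp (pow_dvd_pow_of_dvd
      ((X_dvd_one_sub_hSeries ψ η).mul_right (1 - hSeries (-ψ) η)) (J + 2)) j (by omega), sub_zero]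
  rw [map_sub, sub_eq_zero] at log_deriv
  rw [genPoly_GFun_eq_coeff_log hψ hψ' hJ, ← coeff_coeffDeriv, log_deriv,
    genPoly_fAux_zero hψ (by omega), genPoly_fAux_zero hψ' (by omega), mul_assoc, mul_assoc,
    coeff_succ_X_mul, coeff_C_mul, coeff_mul_congr (fun _ _ => rfl) tail, mul_one,
    sub_sub_sub_cancel_left, map_sub]
  ring

end Nonresonant

end GeneratingSeries

/-! ### The identity and the bound for `f_{J,0}` -/

section Pointwise

variable {J : ℕ} {ψ : Fin (J + 2) → ℝ} {η : ℝ}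

lemma sum_mul_GFun (hψ : NonResonant η (J + 2) ψ) (hψ' : NonResonant η (J + 2) (-ψ)) :
    (∑ i, ψ i) * GFun (J + 2) η (zeroExtend ψ) =
      fAux (J + 2) 0 η (zeroExtend (-ψ)) - fAux (J + 2) 0 η (zeroExtend ψ) := by
  have generating := weightDeriv_genPoly_GFun hψ hψ' le_rfl
  rw [weightDeriv_genPoly, ← genPoly_comp_neg, ← map_sub] at generating
  have averaged := symmetrize_eq_of_genPoly_eq generating
  rw [symmetrize_sum_range_mul, map_sub, Pi.sub_apply, symmetrize_comp_neg, symmetrize_fAux,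
    symmetrize_GFun] at averaged
  dsimp only at averaged
  rwa [sum_range_zeroExtend, ← zeroExtend_neg] at averaged

lemma abs_fAux_zero_le (hψ : NonResonant η (J + 1) ψ) :
    |fAux (J + 2) 0 η (zeroExtend ψ)| ≤
      |η⁻¹ ^ (J + 2)| * ∑ σ : Equiv.Perm (Fin (J + 2)), |hFun (J + 1) η (zeroExtend (ψ ∘ σ))| := by
  have generating : genPoly ψ (J + 2) (fAux (J + 2) 0 η) =
      genPoly ψ (J + 2) (-(η⁻¹ ^ (J + 2)) • hFun (J + 1) η) := by
    rw [genPoly_fAux_zero hψ le_rfl, map_smul, genPoly_succ ψ (J + 1) (dependsOn_hFun _ _),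
      coeff_hSeries, letterForm]
    simp only [Algebra.smul_def, map_neg, map_pow]
    ring
  have averaged := symmetrize_eq_of_genPoly_eq generating
  rw [symmetrize_fAux, map_smul, Pi.smul_apply, smul_eq_mul] at averaged
  rw [averaged, abs_mul, abs_neg]
  refine mul_le_mul_of_nonneg_left ?_ (abs_nonneg _)
  simpa only [permuteFirst_zeroExtend] using
    abs_symmetrize_le (J := J + 2) (hFun (J + 1) η) (zeroExtend ψ)

end Pointwise

/-! ### Functions of bounded variation -/

section BoundedVariation

/-- On `s`, the function `W` bounds the norm of `Γ` and its decrements bound the increments of `Γ`.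
Unlike bounds on the total variation, such majorants are stable under products. -/
structure IsVariationMajorant {α E : Type*} [Preorder α] [SeminormedAddCommGroup E]
    (W : α → ℝ) (Γ : α → E) (s : Set α) : Prop where
  norm_le : ∀ x ∈ s, ‖Γ x‖ ≤ W x
  norm_sub_le : ∀ x ∈ s, ∀ y ∈ s, x ≤ y → ‖Γ x - Γ y‖ ≤ W x - W y

namespace IsVariationMajorant

section

variable {α E : Type*} [Preorder α] [SeminormedAddCommGroup E] {W : α → ℝ} {Γ : α → E} {s t : Set α}

lemma mono (h : IsVariationMajorant W Γ s) (hts : t ⊆ s) : IsVariationMajorant W Γ t :=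
  ⟨fun x hx => h.norm_le x (hts hx), fun x hx y hy => h.norm_sub_le x (hts hx) y (hts hy)⟩

lemma antitoneOn (h : IsVariationMajorant W Γ s) : AntitoneOn W s := fun x hx y hy hxy =>
  sub_nonneg.mp ((norm_nonneg _).trans (h.norm_sub_le x hx y hy hxy))

end

lemma mul {α A : Type*} [Preorder α] [SeminormedRing A] {W₁ W₂ : α → ℝ} {Γ₁ Γ₂ : α → A} {s : Set α}
    (h₁ : IsVariationMajorant W₁ Γ₁ s) (h₂ : IsVariationMajorant W₂ Γ₂ s) :
    IsVariationMajorant (W₁ * W₂) (Γ₁ * Γ₂) s where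
  norm_le x hx := (norm_mul_le _ _).trans <| mul_le_mul (h₁.norm_le x hx) (h₂.norm_le x hx)
    (norm_nonneg _) ((norm_nonneg _).trans (h₁.norm_le x hx))
  norm_sub_le x hx y hy hxy := by
    have first := h₁.norm_sub_le x hx y hy hxy
    have second := h₂.norm_sub_le x hx y hy hxy
    calc ‖Γ₁ x * Γ₂ x - Γ₁ y * Γ₂ y‖ = ‖(Γ₁ x - Γ₁ y) * Γ₂ x + Γ₁ y * (Γ₂ x - Γ₂ y)‖ := by
          congr 1
          noncomm_ring
      _ ≤ ‖Γ₁ x - Γ₁ y‖ * ‖Γ₂ x‖ + ‖Γ₁ y‖ * ‖Γ₂ x - Γ₂ y‖ :=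
          norm_add_le_of_le (norm_mul_le _ _) (norm_mul_le _ _)
      _ ≤ (W₁ x - W₁ y) * W₂ x + W₁ y * (W₂ x - W₂ y) := add_le_add
          (mul_le_mul first (h₂.norm_le x hx) (norm_nonneg _) ((norm_nonneg _).trans first))
          (mul_le_mul (h₁.norm_le y hy) second (norm_nonneg _)
            ((norm_nonneg _).trans (h₁.norm_le y hy)))
      _ = W₁ x * W₂ x - W₁ y * W₂ y := by ring

lemma prod {α A ι : Type*} [Preorder α] [SeminormedCommRing A] [NormOneClass A] {W : ι → α → ℝ}
    {Γ : ι → α → A} {s : Set α} {t : Finset ι} (h : ∀ i ∈ t, IsVariationMajorant (W i) (Γ i) s) :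
    IsVariationMajorant (∏ i ∈ t, W i) (∏ i ∈ t, Γ i) s := by
  classical
  induction t using Finset.induction_on with
  | empty =>
    exact ⟨fun x _ => by simp, fun x _ y _ _ => by simp⟩
  | insert j t hj ih =>
    rw [Finset.forall_mem_insert] at h
    rw [Finset.prod_insert hj, Finset.prod_insert hj]
    exact h.1.mul (ih h.2)

end IsVariationMajorant

/-- The variation of `f` on `[x, ∞)`. -/
noncomputable def tailVariation {E : Type*} [PseudoEMetricSpace E] (f : ℝ → E) (x : ℝ) : ℝ :=
  (eVariationOn f (Set.Ici x)).toReal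

section

variable {E : Type*} [SeminormedAddCommGroup E] {f : ℝ → E} {a x y : ℝ}

lemma tailVariation_le (hf : BoundedVariationOn f (Set.Ioi a)) (hx : a < x) :
    tailVariation f x ≤ (eVariationOn f (Set.Ioi a)).toReal :=
  ENNReal.toReal_mono hf (eVariationOn.mono f (Set.Ici_subset_Ioi.mpr hx))

lemma norm_sub_le_tailVariation_sub (hf : BoundedVariationOn f (Set.Ioi a)) (hx : a < x)
    (hxy : x ≤ y) : ‖f x - f y‖ ≤ tailVariation f x - tailVariation f y := by
  have hIci : BoundedVariationOn f (Set.Ici x) := hf.mono (Set.Ici_subset_Ioi.mpr hx)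
  have hIcc : BoundedVariationOn f (Set.Icc x y) := hIci.mono Set.Icc_subset_Ici_self
  have hIci' : BoundedVariationOn f (Set.Ici y) := hIci.mono (Set.Ici_subset_Ici.mpr hxy)
  have additivity := eVariationOn.union f (isGreatest_Icc hxy) (isLeast_Ici (a := y))
  rw [Set.Icc_union_Ici_eq_Ici hxy] at additivity
  rw [tailVariation, tailVariation, additivity, ENNReal.toReal_add hIcc hIci',
    add_sub_cancel_right, ← dist_eq_norm]
  exact hIcc.dist_le (Set.left_mem_Icc.mpr hxy) (Set.right_mem_Icc.mpr hxy)

lemma isVariationMajorant_tailVariation (hf : BoundedVariationOn f (Set.Ioi a))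
    (hlim : Filter.Tendsto f Filter.atTop (nhds 0)) :
    IsVariationMajorant (tailVariation f) f (Set.Ioi a) where
  norm_le x hx := by
    have increments : Filter.Tendsto (fun y => ‖f x - f y‖) Filter.atTop (nhds ‖f x - 0‖) :=
      (tendsto_const_nhds.sub hlim).norm
    rw [sub_zero] at increments
    refine le_of_tendsto increments ?_
    filter_upwards [Filter.eventually_ge_atTop x] with y hxy
    exact (norm_sub_le_tailVariation_sub hf hx hxy).trans (sub_le_self _ ENNReal.toReal_nonneg)
  norm_sub_le x hx _ _ hxy := norm_sub_le_tailVariation_sub hf hx hxy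

end

lemma eq_zero_of_tendsto_of_lintegral_Ioi_lt_top {g : ℝ → ℝ≥0∞} {l : ℝ≥0∞} {a : ℝ}
    (hlim : Filter.Tendsto g Filter.atTop (nhds l)) (hint : ∫⁻ x in Set.Ioi a, g x < ⊤) :
    l = 0 := by
  by_contra hl
  obtain ⟨δ, δ_pos, δ_lt⟩ := exists_between (pos_iff_ne_zero.mpr hl)
  obtain ⟨N, hN⟩ := Filter.eventually_atTop.mp (hlim.eventually_const_le δ_lt)
  refine hint.not_ge ?_
  calc ⊤ = ∫⁻ _ in Set.Ioi (max a N), δ := by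
        rw [setLIntegral_const, Real.volume_Ioi, ENNReal.mul_top δ_pos.ne']
    _ ≤ ∫⁻ x in Set.Ioi (max a N), g x :=
        setLIntegral_mono' measurableSet_Ioi fun x hx => hN x ((le_max_right a N).trans hx.le)
    _ ≤ ∫⁻ x in Set.Ioi a, g x := lintegral_mono_set (Set.Ioi_subset_Ioi (le_max_left a N))

lemma tendsto_zero_of_boundedVariationOn_of_lintegral_lt_top {E : Type*} [NormedAddCommGroup E]
    [CompleteSpace E] {f : ℝ → E} {a : ℝ} {p : ℕ} (hf : BoundedVariationOn f (Set.Ioi a))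
    (hp : ∫⁻ x in Set.Ioi a, ‖f x‖ₑ ^ p < ⊤) : Filter.Tendsto f Filter.atTop (nhds 0) := by
  obtain ⟨l, hl⟩ := hf.exists_tendsto_atTop
  rw [inf_of_le_right (Filter.le_principal_iff.mpr (Filter.Ioi_mem_atTop a))] at hl
  have limit_pow : ‖l‖ₑ ^ p = 0 :=
    eq_zero_of_tendsto_of_lintegral_Ioi_lt_top
      ((ENNReal.continuous_pow p).tendsto _ |>.comp hl.enorm) hp
  rwa [enorm_eq_zero.mp (eq_zero_of_pow_eq_zero limit_pow)] at hl

lemma tendsto_zero_of_lintegral_iSup_lt_top {ι E : Type*} [NormedAddCommGroup E] [CompleteSpace E]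
    {f : ι → ℝ → E} {a : ℝ} {p : ℕ} (hf : ∀ k, BoundedVariationOn (f k) (Set.Ioi a))
    (hp : ∫⁻ x in Set.Ioi a, (⨆ k, ‖f k x‖ₑ) ^ p < ⊤) (k : ι) :
    Filter.Tendsto (f k) Filter.atTop (nhds 0) :=
  tendsto_zero_of_boundedVariationOn_of_lintegral_lt_top (hf k) <|
    (lintegral_mono fun x => pow_le_pow_left' (le_iSup (fun k => ‖f k x‖ₑ) k) p).trans_lt hp

lemma aemeasurable_of_locallyBoundedVariationOn {f : ℝ → ℝ} {s : Set ℝ} (hs : MeasurableSet s)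
    (hf : LocallyBoundedVariationOn f s) : AEMeasurable f (volume.restrict s) := by
  obtain ⟨q, r, hq, hr, rfl, -⟩ := hf.exists_monotoneOn_sub_monotoneOn'
  exact (aemeasurable_restrict_of_monotoneOn hs hq).sub
    (aemeasurable_restrict_of_monotoneOn hs hr)

lemma aestronglyMeasurable_of_locallyBoundedVariationOn {f : ℝ → ℂ} {s : Set ℝ}
    (hs : MeasurableSet s) (hf : LocallyBoundedVariationOn f s) :
    AEStronglyMeasurable f (volume.restrict s) := by
  have hre := aemeasurable_of_locallyBoundedVariationOn hs
    (Complex.reCLM.lipschitz.comp_locallyBoundedVariationOn hf)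
  have him := aemeasurable_of_locallyBoundedVariationOn hs
    (Complex.imCLM.lipschitz.comp_locallyBoundedVariationOn hf)
  exact (aemeasurable_of_re_im hre him).aestronglyMeasurable

lemma norm_le_of_additive {E : Type*} [SeminormedAddCommGroup E] {R : ℝ → ℝ → E} {W : ℝ → ℝ}
    {a b C M : ℝ} (hab : a ≤ b)
    (hadd : ∀ x y, a ≤ x → x ≤ y → y ≤ b → R a x + R x y = R a y)
    (hle : ∀ x y, a ≤ x → x ≤ y → y ≤ b → ‖R x y‖ ≤ (C + M * (y - x)) * (W x - W y)) :
    ‖R a b‖ ≤ C * (W a - W b) := by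
  have uniform_partition (h : ℝ) (hh : 0 ≤ h) (N : ℕ) (hN : a + N * h ≤ b) :
      ‖R a (a + N * h)‖ ≤ (C + M * h) * (W a - W (a + N * h)) := by
    induction N with
    | zero => simpa using hle a a le_rfl le_rfl hab
    | succ N ih =>
      push_cast at hN ⊢
      have left_le : a ≤ a + N * h := le_add_of_nonneg_right (by positivity)
      have le_right : a + N * h ≤ a + (N + 1) * h := by linarith
      have last := hle _ _ left_le le_right hN
      rw [show a + (N + 1) * h - (a + N * h) = h by ring] at last
      rw [← hadd _ _ left_le le_right hN]
      refine (norm_add_le_of_le (ih (le_right.trans hN)) last).trans_eq ?_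
      ring
  have mesh : Filter.Tendsto (fun N : ℕ => (b - a) / ((N : ℝ) + 1)) Filter.atTop (nhds 0) := by
    simpa [div_eq_mul_inv] using
      (tendsto_one_div_add_atTop_nhds_zero_nat (𝕜 := ℝ)).const_mul (b - a)
  have limit : Filter.Tendsto (fun N : ℕ => (C + M * ((b - a) / ((N : ℝ) + 1))) * (W a - W b))
      Filter.atTop (nhds (C * (W a - W b))) := by
    simpa using ((mesh.const_mul M).const_add C).mul_const (W a - W b)
  refine ge_of_tendsto' limit fun N => ?_
  have endpoint : a + ((N + 1 : ℕ) : ℝ) * ((b - a) / ((N : ℝ) + 1)) = b := by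
    push_cast
    field_simp
    ring
  have bound := uniform_partition ((b - a) / ((N : ℝ) + 1))
    (div_nonneg (sub_nonneg.mpr hab) (by positivity)) (N + 1) endpoint.le
  rwa [endpoint] at bound

end BoundedVariation

/-! ### Oscillatory integrals -/

section Integrals

variable {𝕜 : Type*} [RCLike 𝕜] {f F Γ : ℝ → 𝕜} {W : ℝ → ℝ} {a b C L M : ℝ}

namespace IsVariationMajorant

lemma norm_integral_mul_sub_boundary_le_of_short (h : IsVariationMajorant W Γ (Set.Icc a b))
    (hF : ∀ t, HasDerivAt F (f t) t) (hf : Continuous f) (hfM : ∀ t, ‖f t‖ ≤ M)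
    (hFC : ∀ t, ‖F t‖ ≤ C) (hΓ : IntervalIntegrable Γ volume a b) (hab : a ≤ b) :
    ‖(∫ t in a..b, f t * Γ t) - (F b * Γ b - F a * Γ a)‖ ≤
      (C + M * (b - a)) * (W a - W b) := by
  have ha := Set.left_mem_Icc.mpr hab
  have hb := Set.right_mem_Icc.mpr hab
  have split : (∫ t in a..b, f t * Γ t) - (F b * Γ b - F a * Γ a) =
      F a * (Γ a - Γ b) + ∫ t in a..b, f t * (Γ t - Γ b) := by
    simp only [mul_sub (f _)]
    rw [intervalIntegral.integral_sub (hΓ.continuousOn_mul hf.continuousOn)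
      ((hf.intervalIntegrable a b).mul_const _), intervalIntegral.integral_mul_const,
      intervalIntegral.integral_eq_sub_of_hasDerivAt (fun t _ => hF t) (hf.intervalIntegrable a b)]
    ring
  have boundary : ‖F a * (Γ a - Γ b)‖ ≤ C * (W a - W b) := by
    rw [norm_mul]
    exact mul_le_mul (hFC a) (h.norm_sub_le a ha b hb hab) (norm_nonneg _)
      ((norm_nonneg _).trans (hFC a))
  have remainder : ‖∫ t in a..b, f t * (Γ t - Γ b)‖ ≤ M * (W a - W b) * |b - a| := by
    refine intervalIntegral.norm_integral_le_of_norm_le_const fun t ht => ?_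
    rw [Set.uIoc_of_le hab] at ht
    have ht' := Set.Ioc_subset_Icc_self ht
    rw [norm_mul]
    refine mul_le_mul (hfM t) ?_ (norm_nonneg _) ((norm_nonneg _).trans (hfM t))
    linarith [h.norm_sub_le t ht' b hb ht.2, h.antitoneOn ha ht' ht.1.le]
  rw [abs_of_nonneg (sub_nonneg.mpr hab)] at remainder
  rw [split]
  linarith [norm_add_le_of_le boundary remainder]

lemma norm_integral_mul_sub_boundary_le (h : IsVariationMajorant W Γ (Set.Icc a b))
    (hF : ∀ t, HasDerivAt F (f t) t) (hf : Continuous f) (hfM : ∀ t, ‖f t‖ ≤ M)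
    (hFC : ∀ t, ‖F t‖ ≤ C) (hΓ : IntervalIntegrable Γ volume a b) (hab : a ≤ b) :
    ‖(∫ t in a..b, f t * Γ t) - (F b * Γ b - F a * Γ a)‖ ≤ C * (W a - W b) := by
  have integrable (x y : ℝ) (hx : a ≤ x) (hxy : x ≤ y) (hy : y ≤ b) :
      IntervalIntegrable Γ volume x y := by
    refine hΓ.mono_set ?_
    rw [Set.uIcc_of_le hxy, Set.uIcc_of_le hab]
    exact Set.Icc_subset_Icc hx hy
  have integrable_mul (x y : ℝ) (hx : a ≤ x) (hxy : x ≤ y) (hy : y ≤ b) :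
      IntervalIntegrable (fun t => f t * Γ t) volume x y :=
    (integrable x y hx hxy hy).continuousOn_mul hf.continuousOn
  refine norm_le_of_additive (M := M)
    (R := fun x y => (∫ t in x..y, f t * Γ t) - (F y * Γ y - F x * Γ x)) hab
    (fun x y hx hxy hy => ?_) fun x y hx hxy hy => ?_
  · rw [← intervalIntegral.integral_add_adjacent_intervals
      (integrable_mul a x le_rfl hx (hxy.trans hy)) (integrable_mul x y hx hxy hy)]
    ring
  · exact (h.mono (Set.Icc_subset_Icc hx hy)).norm_integral_mul_sub_boundary_le_of_short hF hf hfM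
      hFC (integrable x y hx hxy hy) hxy

lemma norm_integral_mul_le_of_Icc (h : IsVariationMajorant W Γ (Set.Icc a b))
    (hF : ∀ t, HasDerivAt F (f t) t) (hf : Continuous f) (hfM : ∀ t, ‖f t‖ ≤ M)
    (hFC : ∀ t, ‖F t‖ ≤ C) (hΓ : IntervalIntegrable Γ volume a b) (hab : a ≤ b) :
    ‖∫ t in a..b, f t * Γ t‖ ≤ 2 * C * W a := by
  have boundary_le (t : ℝ) (ht : t ∈ Set.Icc a b) : ‖F t * Γ t‖ ≤ C * W t := by
    rw [norm_mul]
    exact mul_le_mul (hFC t) (h.norm_le t ht) (norm_nonneg _) ((norm_nonneg _).trans (hFC t))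
  have parts := h.norm_integral_mul_sub_boundary_le hF hf hfM hFC hΓ hab
  have boundary := norm_sub_le_of_le (boundary_le b (Set.right_mem_Icc.mpr hab))
    (boundary_le a (Set.left_mem_Icc.mpr hab))
  have triangle := norm_le_norm_sub_add (∫ t in a..b, f t * Γ t) (F b * Γ b - F a * Γ a)
  linarith

lemma norm_integral_mul_le (h : IsVariationMajorant W Γ (Set.Ioc a b))
    (hL : ∀ x ∈ Set.Ioc a b, W x ≤ L) (hF : ∀ t, HasDerivAt F (f t) t) (hf : Continuous f)
    (hfM : ∀ t, ‖f t‖ ≤ M) (hFC : ∀ t, ‖F t‖ ≤ C) (hΓ : IntervalIntegrable Γ volume a b)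
    (hab : a < b) : ‖∫ t in a..b, f t * Γ t‖ ≤ 2 * C * L := by
  have continuity : Filter.Tendsto (fun x => ‖∫ t in x..b, f t * Γ t‖)
      (nhdsWithin a (Set.Ioc a b)) (nhds ‖∫ t in a..b, f t * Γ t‖) := by
    have product := (intervalIntegrable_iff_integrableOn_Icc_of_le hab.le).mp
      (hΓ.continuousOn_mul hf.continuousOn)
    rw [← Set.uIcc_of_le hab.le] at product
    have primitive := intervalIntegral.continuousOn_primitive_interval_left product
    rw [Set.uIcc_of_le hab.le] at primitive
    exact ((primitive a (Set.left_mem_Icc.mpr hab.le)).mono Set.Ioc_subset_Icc_self).norm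
  rw [nhdsWithin_Ioc_eq_nhdsGT hab] at continuity
  refine le_of_tendsto continuity ?_
  filter_upwards [Ioc_mem_nhdsGT hab] with x hx
  have subinterval : Set.uIcc x b ⊆ Set.uIcc a b := by
    rw [Set.uIcc_of_le hx.2, Set.uIcc_of_le hab.le]
    exact Set.Icc_subset_Icc_left hx.1.le
  have interior := (h.mono fun t ht => ⟨hx.1.trans_le ht.1, ht.2⟩).norm_integral_mul_le_of_Icc hF hf
    hfM hFC (hΓ.mono_set subinterval) hx.2
  exact interior.trans (mul_le_mul_of_nonneg_left (hL x hx)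
    (mul_nonneg zero_le_two ((norm_nonneg _).trans (hFC a))))

end IsVariationMajorant

end Integrals

section Exponential

lemma norm_exp_neg_I_mul (Φ x : ℝ) : ‖Complex.exp (-Complex.I * Φ * x)‖ = 1 := by
  rw [Complex.norm_exp]
  simp

lemma hasDerivAt_I_mul_exp_neg_I_mul (Φ x : ℝ) :
    HasDerivAt (fun t : ℝ => Complex.I * Complex.exp (-Complex.I * Φ * t))
      (Φ * Complex.exp (-Complex.I * Φ * x)) x := by
  have exponent : HasDerivAt (fun t : ℝ => -Complex.I * Φ * (t : ℂ)) (-Complex.I * Φ) x := by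
    simpa using (Complex.ofRealCLM.hasDerivAt (x := x)).const_mul (-Complex.I * Φ)
  refine (exponent.cexp.const_mul Complex.I).congr_deriv ?_
  linear_combination (-(Φ : ℂ) * Complex.exp (-Complex.I * Φ * x)) * Complex.I_mul_I

lemma IsVariationMajorant.norm_mul_integral_exp_mul_le {Γ : ℝ → ℂ} {W : ℝ → ℝ} {a b L : ℝ}
    (h : IsVariationMajorant W Γ (Set.Ioc a b)) (hL : ∀ x ∈ Set.Ioc a b, W x ≤ L) (Φ : ℝ)
    (hΓ : IntervalIntegrable Γ volume a b) (hab : a < b) :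
    ‖Φ * ∫ t in a..b, Complex.exp (-Complex.I * Φ * t) * Γ t‖ ≤ 2 * L := by
  have norm_derivative (t : ℝ) : ‖(Φ : ℂ) * Complex.exp (-Complex.I * Φ * t)‖ ≤ |Φ| := by
    rw [norm_mul, norm_exp_neg_I_mul, mul_one, Complex.norm_real, Real.norm_eq_abs]
  have norm_primitive (t : ℝ) : ‖Complex.I * Complex.exp (-Complex.I * Φ * t)‖ ≤ 1 := by
    rw [norm_mul, norm_exp_neg_I_mul, mul_one, Complex.norm_I]
  have bound := h.norm_integral_mul_le hL (hasDerivAt_I_mul_exp_neg_I_mul Φ) (by fun_prop)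
    norm_derivative norm_primitive hΓ hab
  simpa only [mul_assoc, intervalIntegral.integral_const_mul, mul_one] using bound

end Exponential

section OscillatoryIntegral

variable {ι : Type*} [Fintype ι] {ψ : ι → ℝ} {Γ : ι → ℝ → ℂ} {a b : ℝ}

/-- The integral over `[a, b]` of the product of the modulated oscillations `e^{-iψ_j x} Γ_j(x)`. -/
noncomputable def oscillatoryIntegral (ψ : ι → ℝ) (Γ : ι → ℝ → ℂ) (a b : ℝ) : ℂ :=
  ∫ x in a..b, Complex.exp (-Complex.I * (∑ j, ψ j : ℝ) * x) * ∏ j, Γ j x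

lemma conj_oscillatoryIntegral_neg {Γ' : ι → ℝ → ℂ} (hab : a ≤ b)
    (hΓ : ∀ j, ∀ x ∈ Set.Ioc a b, Γ' j x = starRingEnd ℂ (Γ j x)) :
    starRingEnd ℂ (oscillatoryIntegral (-ψ) Γ' a b) = oscillatoryIntegral ψ Γ a b := by
  rw [oscillatoryIntegral, oscillatoryIntegral, intervalIntegral.integral_of_le hab,
    intervalIntegral.integral_of_le hab, ← integral_conj]
  refine setIntegral_congr_fun measurableSet_Ioc fun x hx => ?_
  simp only [map_mul, map_prod, ← Complex.exp_conj, hΓ _ x hx, Complex.conj_conj]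
  simp

lemma aestronglyMeasurable_prod_of_boundedVariationOn
    (hΓ : ∀ j, BoundedVariationOn (Γ j) (Set.Ioi a)) :
    AEStronglyMeasurable (fun x => ∏ j, Γ j x) (volume.restrict (Set.Ioi a)) :=
  Finset.aestronglyMeasurable_fun_prod _ fun j _ =>
    aestronglyMeasurable_of_locallyBoundedVariationOn measurableSet_Ioi
      (hΓ j).locallyBoundedVariationOn

lemma prod_tailVariation_le {τ : ℝ≥0∞} (hτ : τ ≠ ⊤)
    (hΓ : ∀ j, eVariationOn (Γ j) (Set.Ioi a) ≤ τ) {x : ℝ} (hx : a < x) :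
    ∏ j, tailVariation (Γ j) x ≤ τ.toReal ^ Fintype.card ι := by
  refine (Finset.prod_le_prod (fun j _ => ENNReal.toReal_nonneg) fun j _ =>
    (tailVariation_le ((hΓ j).trans_lt hτ.lt_top).ne hx).trans
      (ENNReal.toReal_mono hτ (hΓ j))).trans_eq ?_
  rw [Finset.prod_const, Finset.card_univ]

lemma isVariationMajorant_prod_tailVariation (hΓ : ∀ j, BoundedVariationOn (Γ j) (Set.Ioi a))
    (hlim : ∀ j, Filter.Tendsto (Γ j) Filter.atTop (nhds 0)) :
    IsVariationMajorant (fun x => ∏ j, tailVariation (Γ j) x) (fun x => ∏ j, Γ j x)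
      (Set.Ioi a) := by
  simpa only [Finset.prod_fn] using IsVariationMajorant.prod (s := Set.Ioi a) fun j _ =>
    isVariationMajorant_tailVariation (hΓ j) (hlim j)

lemma norm_prod_le_of_eVariationOn_le {τ : ℝ≥0∞} (hτ : τ ≠ ⊤)
    (hΓ : ∀ j, eVariationOn (Γ j) (Set.Ioi a) ≤ τ)
    (hlim : ∀ j, Filter.Tendsto (Γ j) Filter.atTop (nhds 0)) {x : ℝ} (hx : a < x) :
    ‖∏ j, Γ j x‖ ≤ τ.toReal ^ Fintype.card ι :=
  ((isVariationMajorant_prod_tailVariation (fun j => ((hΓ j).trans_lt hτ.lt_top).ne)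
    hlim).norm_le x hx).trans (prod_tailVariation_le hτ hΓ hx)

lemma enorm_sum_mul_oscillatoryIntegral_le {τ : ℝ≥0∞} (hτ : τ ≠ ⊤)
    (hΓ : ∀ j, eVariationOn (Γ j) (Set.Ioi a) ≤ τ)
    (hlim : ∀ j, Filter.Tendsto (Γ j) Filter.atTop (nhds 0)) (hab : a < b) :
    ‖((∑ j, ψ j : ℝ) : ℂ) * oscillatoryIntegral ψ Γ a b‖ₑ ≤ 2 * τ ^ Fintype.card ι := by
  have bounded (j : ι) : BoundedVariationOn (Γ j) (Set.Ioi a) := ((hΓ j).trans_lt hτ.lt_top).ne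
  have integrable : IntervalIntegrable (fun x => ∏ j, Γ j x) volume a b := by
    rw [intervalIntegrable_iff_integrableOn_Ioc_of_le hab.le]
    refine IntegrableOn.of_bound measure_Ioc_lt_top
      ((aestronglyMeasurable_prod_of_boundedVariationOn bounded).mono_set
        Set.Ioc_subset_Ioi_self) (τ.toReal ^ Fintype.card ι) ?_
    filter_upwards [ae_restrict_mem measurableSet_Ioc] with x hx
    exact norm_prod_le_of_eVariationOn_le hτ hΓ hlim hx.1
  have bound := ((isVariationMajorant_prod_tailVariation bounded hlim).mono
    Set.Ioc_subset_Ioi_self).norm_mul_integral_exp_mul_le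
      (fun x hx => prod_tailVariation_le hτ hΓ hx.1) (∑ j, ψ j) integrable hab
  rw [← ofReal_norm]
  refine (ENNReal.ofReal_le_ofReal bound).trans_eq ?_
  rw [ENNReal.ofReal_mul zero_le_two, ENNReal.ofReal_pow ENNReal.toReal_nonneg,
    ENNReal.ofReal_toReal hτ, ENNReal.ofReal_ofNat]

lemma hasSum_mul_oscillatoryIntegral {κ : Type*} [Countable κ] {w : κ → ℂ} {ψ : κ → ι → ℝ}
    {Γ : κ → ι → ℝ → ℂ} {L : ℝ} (hw : Summable fun m => ‖w m‖)
    (hΓ : ∀ m, AEStronglyMeasurable (fun x => ∏ j, Γ m j x) (volume.restrict (Set.Ioc a b)))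
    (hL : ∀ m, ∀ x ∈ Set.Ioc a b, ‖∏ j, Γ m j x‖ ≤ L) (hab : a ≤ b) :
    HasSum (fun m => w m * oscillatoryIntegral (ψ m) (Γ m) a b) (∫ x in a..b, ∑' m, w m *
      (Complex.exp (-Complex.I * (∑ j, ψ m j : ℝ) * x) * ∏ j, Γ m j x)) := by
  have norm_le (m : κ) (x : ℝ) (hx : x ∈ Set.uIoc a b) :
      ‖w m * (Complex.exp (-Complex.I * (∑ j, ψ m j : ℝ) * x) * ∏ j, Γ m j x)‖ ≤ ‖w m‖ * L := by
    rw [Set.uIoc_of_le hab] at hx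
    rw [norm_mul, norm_mul, norm_exp_neg_I_mul, one_mul]
    exact mul_le_mul_of_nonneg_left (hL m x hx) (norm_nonneg _)
  simp only [oscillatoryIntegral, ← intervalIntegral.integral_const_mul]
  refine intervalIntegral.hasSum_integral_of_dominated_convergence (fun m _ => ‖w m‖ * L)
    (fun m => ?_) (fun m => .of_forall (norm_le m)) (.of_forall fun _ _ => hw.mul_right L)
    intervalIntegrable_const (.of_forall fun x hx => ?_)
  · rw [Set.uIoc_of_le hab]
    exact ((Continuous.aestronglyMeasurable (by fun_prop)).mul (hΓ m)).const_mul _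
  · exact (Summable.of_norm_bounded (hw.mul_right L) fun m => norm_le m x hx).hasSum

end OscillatoryIntegral

/-! ### The multiple sums -/

section MultipleSums

variable {η : ℝ} {J : ℕ} {c : ℕ → ℂ} {φ : ℕ → ℝ} {γ : ℕ → ℝ → ℂ} {a b : ℝ}

lemma padFin_eq_zeroExtend (J : ℕ) (φ : ℕ → ℝ) (m : Fin J → ℕ) :
    padFin J φ m = zeroExtend (φ ∘ m) := rfl

lemma prod_mul_exp_neg_I_mul_mul (m : Fin J → ℕ) (x : ℝ) :
    ∏ i, (c (m i) * Complex.exp (-Complex.I * φ (m i) * x) * γ (m i) x) =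
      (∏ i, c (m i)) * (Complex.exp (-Complex.I * (∑ i, φ (m i) : ℝ) * x) * ∏ i, γ (m i) x) := by
  rw [Finset.prod_mul_distrib, Finset.prod_mul_distrib, ← Complex.exp_sum, ← Finset.sum_mul,
    ← Finset.mul_sum, Complex.ofReal_sum, mul_assoc]

lemma summable_mul_prod_snoc {κ R : Type*} [NormedField R] {c : κ → R}
    (hc : Summable fun k => ‖c k‖) {r : (Fin J → κ) → ℝ} (hr : ∀ m, 0 ≤ r m)
    (h : Summable fun m : Fin J → κ => ‖∏ i, c (m i)‖ * r m) :
    Summable fun m : Fin (J + 1) → κ => ‖∏ i, c (m i)‖ * r (fun i => m i.castSucc) := by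
  rw [← (Fin.snocEquiv fun _ : Fin (J + 1) => κ).summable_iff]
  refine (hc.mul_of_nonneg h (fun _ => norm_nonneg _)
    fun m => mul_nonneg (norm_nonneg _) (hr m)).congr fun x => ?_
  simp only [Function.comp_apply, Fin.snocEquiv_apply, Fin.prod_univ_castSucc, Fin.snoc_castSucc,
    Fin.snoc_last, norm_mul]
  ring

lemma summable_prod_mul_hFun_comp_perm (hc : Summable fun k => ‖c k‖)
    (hh : Summable fun m : Fin J → ℕ => ‖∏ i, c (m i)‖ * |hFun J η (padFin J φ m)|)
    (σ : Equiv.Perm (Fin (J + 1))) :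
    Summable fun m : Fin (J + 1) → ℕ =>
      ‖∏ i, c (m i)‖ * |hFun J η (padFin (J + 1) φ (m ∘ σ))| := by
  refine ((Equiv.arrowCongr σ.symm (Equiv.refl ℕ)).summable_iff.mpr
    (summable_mul_prod_snoc hc (fun _ => abs_nonneg _) hh)).congr fun m => ?_
  have initial : hFun J η (padFin J φ fun i => (m ∘ σ) i.castSucc) =
      hFun J η (padFin (J + 1) φ (m ∘ σ)) := by
    refine dependsOn_hFun J η fun i (hi : i < J) => ?_
    rw [padFin, padFin, dif_pos hi, dif_pos (hi.trans J.lt_succ_self)]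
    rfl
  change ‖∏ i, c (m (σ i))‖ * |hFun J η (padFin J φ fun i => (m ∘ σ) i.castSucc)| = _
  rw [initial, Equiv.prod_comp σ fun i => c (m i)]

lemma summable_prod_mul_fAux_zero (hφ : NonResonant η (J + 1) φ) (hc : Summable fun k => ‖c k‖)
    (hh : Summable fun m : Fin (J + 1) → ℕ =>
      ‖∏ i, c (m i)‖ * |hFun (J + 1) η (padFin (J + 1) φ m)|) :
    Summable fun m : Fin (J + 2) → ℕ =>
      ‖∏ i, c (m i)‖ * |fAux (J + 2) 0 η (padFin (J + 2) φ m)| := by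
  refine Summable.of_nonneg_of_le (fun m => by positivity) (fun m => ?_)
    ((summable_sum (s := Finset.univ) fun σ _ =>
      summable_prod_mul_hFun_comp_perm hc hh σ).mul_left |η⁻¹ ^ (J + 2)|)
  rw [← Finset.mul_sum, mul_left_comm]
  simp only [padFin_eq_zeroExtend, ← Function.comp_assoc]
  exact mul_le_mul_of_nonneg_left (abs_fAux_zero_le (hφ.comp m)) (norm_nonneg _)

lemma hasSum_integral_SFun0 {τ : ℝ≥0∞} (hτ : τ ≠ ⊤)
    (hγ : ∀ k, eVariationOn (γ k) (Set.Ioi a) ≤ τ)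
    (hlim : ∀ k, Filter.Tendsto (γ k) Filter.atTop (nhds 0))
    (hf : Summable fun m : Fin J → ℕ => ‖∏ i, c (m i)‖ * |fAux J 0 η (padFin J φ m)|)
    (hab : a ≤ b) :
    HasSum (fun m : Fin J → ℕ => (fAux J 0 η (padFin J φ m) * ∏ i, c (m i)) *
      oscillatoryIntegral (φ ∘ m) (γ ∘ m) a b) (∫ x in a..b, SFun0 η c φ γ J x) := by
  have weights : Summable fun m : Fin J → ℕ =>
      ‖(fAux J 0 η (padFin J φ m) : ℂ) * ∏ i, c (m i)‖ :=
    hf.congr fun m => by rw [norm_mul, Complex.norm_real, Real.norm_eq_abs, mul_comm]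
  have bounded (k : ℕ) : BoundedVariationOn (γ k) (Set.Ioi a) := ((hγ k).trans_lt hτ.lt_top).ne
  convert hasSum_mul_oscillatoryIntegral (ψ := fun m => φ ∘ m) (Γ := fun m => γ ∘ m) weights
    (fun m => (aestronglyMeasurable_prod_of_boundedVariationOn fun i => bounded (m i)).mono_set
      Set.Ioc_subset_Ioi_self)
    (fun m x hx => norm_prod_le_of_eVariationOn_le hτ (fun i => hγ (m i)) (fun i => hlim (m i))
      hx.1) hab using 4 with x
  refine tsum_congr fun m => ?_
  rw [prod_mul_exp_neg_I_mul_mul, ← mul_assoc]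
  rfl

lemma enorm_im_le_of_hasSum {ι : Type*} (e : Equiv.Perm ι) {F : ι → ℂ} {s : ℂ} (hF : HasSum F s)
    {B : ι → ℝ≥0∞} (hB : ∀ i, ‖F i - starRingEnd ℂ (F (e i))‖ₑ ≤ 2 * B i) :
    ENNReal.ofReal |s.im| ≤ ∑' i, B i := by
  have conjugate : HasSum (fun i => starRingEnd ℂ (F (e i))) (starRingEnd ℂ s) :=
    Complex.hasSum_conj'.mpr (by simpa [Function.comp_def] using e.hasSum_iff.mpr hF)
  have enorm_sub_conj : ‖s - starRingEnd ℂ s‖ₑ = 2 * ENNReal.ofReal |s.im| := by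
    rw [Complex.sub_conj, ← ofReal_norm, norm_mul, Complex.norm_I, Complex.norm_real, mul_one,
      Real.norm_eq_abs, abs_mul, ENNReal.ofReal_mul (abs_nonneg _)]
    simp
  have doubled : (2 : ℝ≥0∞) * ENNReal.ofReal |s.im| ≤ 2 * ∑' i, B i := by
    rw [← enorm_sub_conj, ← (hF.sub conjugate).tsum_eq, ← ENNReal.tsum_mul_left]
    exact enorm_tsum_le_tsum_enorm.trans (ENNReal.tsum_le_tsum hB)
  exact (ENNReal.mul_le_mul_iff_right two_ne_zero ENNReal.ofNat_ne_top).mp doubled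

end MultipleSums

section Involution

variable {η : ℝ} {J : ℕ} {c : ℕ → ℂ} {φ : ℕ → ℝ} {γ : ℕ → ℝ → ℂ} {a b : ℝ} {star : ℕ → ℕ}

lemma sub_conj_comp_star (hφ : NonResonant η (J + 2) φ)
    (hcs : ∀ k, c (star k) = starRingEnd ℂ (c k)) (hφs : ∀ k, φ (star k) = -φ k)
    (hγs : ∀ k, ∀ x ∈ Set.Ioc a b, γ (star k) x = starRingEnd ℂ (γ k x)) (hab : a ≤ b)
    (m : Fin (J + 2) → ℕ) :
    (fAux (J + 2) 0 η (padFin (J + 2) φ m) * ∏ i, c (m i)) *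
        oscillatoryIntegral (φ ∘ m) (γ ∘ m) a b -
      starRingEnd ℂ ((fAux (J + 2) 0 η (padFin (J + 2) φ (star ∘ m)) * ∏ i, c ((star ∘ m) i)) *
        oscillatoryIntegral (φ ∘ star ∘ m) (γ ∘ star ∘ m) a b) =
      -((∏ i, c (m i)) * GFun (J + 2) η (padFin (J + 2) φ m) *
        ((∑ i, (φ ∘ m) i : ℝ) * oscillatoryIntegral (φ ∘ m) (γ ∘ m) a b)) := by
  have neg_frequencies : φ ∘ star ∘ m = -(φ ∘ m) := funext fun i => hφs (m i)
  have conj_coefficients : starRingEnd ℂ (∏ i, c ((star ∘ m) i)) = ∏ i, c (m i) := by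
    simp only [map_prod, Function.comp_apply, hcs, Complex.conj_conj]
  have conj_integral : starRingEnd ℂ (oscillatoryIntegral (φ ∘ star ∘ m) (γ ∘ star ∘ m) a b) =
      oscillatoryIntegral (φ ∘ m) (γ ∘ m) a b := by
    rw [neg_frequencies]
    exact conj_oscillatoryIntegral_neg hab fun i => hγs (m i)
  have identity := congrArg (fun r : ℝ => (r : ℂ))
    (sum_mul_GFun (hφ.comp m) (neg_frequencies ▸ hφ.comp (star ∘ m)))
  rw [map_mul, map_mul, conj_coefficients, conj_integral, Complex.conj_ofReal]
  simp only [padFin_eq_zeroExtend, neg_frequencies]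
  push_cast at identity ⊢
  linear_combination ((∏ i, c (m i)) * oscillatoryIntegral (φ ∘ m) (γ ∘ m) a b) * identity

lemma ofReal_abs_im_integral_SFun0_le {τ : ℝ≥0∞} (hτ : τ ≠ ⊤)
    (hγ : ∀ k, eVariationOn (γ k) (Set.Ioi a) ≤ τ)
    (hlim : ∀ k, Filter.Tendsto (γ k) Filter.atTop (nhds 0)) (hc : Summable fun k => ‖c k‖)
    (hh : Summable fun m : Fin (J + 1) → ℕ =>
      ‖∏ i, c (m i)‖ * |hFun (J + 1) η (padFin (J + 1) φ m)|)
    (hφ : NonResonant η (J + 2) φ) (hstar : Function.Involutive star)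
    (hcs : ∀ k, c (star k) = starRingEnd ℂ (c k)) (hφs : ∀ k, φ (star k) = -φ k)
    (hγs : ∀ k, ∀ x ∈ Set.Ioc a b, γ (star k) x = starRingEnd ℂ (γ k x)) (hab : a < b) :
    ENNReal.ofReal |(∫ x in a..b, SFun0 η c φ γ (J + 2) x).im| ≤
      calEFun η c φ (J + 2) * τ ^ (J + 2) := by
  have nonresonant : NonResonant η (J + 1) φ := fun K L hK hKL hL =>
    hφ K L hK hKL (Nat.le_succ_of_le hL)
  have expansion :=
    hasSum_integral_SFun0 hτ hγ hlim (summable_prod_mul_fAux_zero nonresonant hc hh) hab.le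
  rw [calEFun, ← ENNReal.tsum_mul_right]
  refine enorm_im_le_of_hasSum (Equiv.arrowCongr (Equiv.refl _) hstar.toPerm) expansion
    fun m => ?_
  refine (congrArg enorm (sub_conj_comp_star hφ hcs hφs hγs hab.le m)).trans_le ?_
  rw [enorm_neg, enorm_mul, enorm_mul]
  have bound := enorm_sum_mul_oscillatoryIntegral_le (ψ := φ ∘ m) hτ (fun i => hγ (m i))
    (fun i => hlim (m i)) hab
  rw [Fintype.card_fin] at bound
  refine (mul_le_mul_right bound _).trans_eq ?_
  simp only [enorm_eq_nnnorm, Complex.nnnorm_real]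
  ring

theorem stmt12_general {l : ℝ} (hBV : ⨆ k, eVariationOn (γ k) (Set.Ioi l) < ⊤)
    (hlim : ∀ k, Filter.Tendsto (γ k) Filter.atTop (nhds 0)) (hc : Summable fun k => ‖c k‖)
    (hJ : 2 ≤ J)
    (hh : Summable fun m : Fin (J - 1) → ℕ =>
      ‖∏ i, c (m i)‖ * |hFun (J - 1) η (padFin (J - 1) φ m)|)
    (hφ : NonResonant η J φ)
    (hinv : ∃ star : ℕ → ℕ, Function.Involutive star ∧
      (∀ k, c (star k) = starRingEnd ℂ (c k)) ∧
      (∀ k, φ (star k) = -φ k) ∧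
      (∀ k, ∀ x ∈ Set.Ioi l, γ (star k) x = starRingEnd ℂ (γ k x)))
    (hla : l ≤ a) (hab : a < b) :
    ENNReal.ofReal |(∫ x in a..b, SFun0 η c φ γ J x).im| ≤
      calEFun η c φ J * (⨆ k, eVariationOn (γ k) (Set.Ioi l)) ^ J := by
  obtain ⟨star, hstar, hcs, hφs, hγs⟩ := hinv
  obtain ⟨J, rfl⟩ := Nat.exists_eq_add_of_le' hJ
  have variation_le (k : ℕ) : eVariationOn (γ k) (Set.Ioi a) ≤
      ⨆ k, eVariationOn (γ k) (Set.Ioi l) :=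
    (eVariationOn.mono _ (Set.Ioi_subset_Ioi hla)).trans
      (le_iSup (fun k => eVariationOn (γ k) (Set.Ioi l)) k)
  exact ofReal_abs_im_integral_SFun0_le hBV.ne variation_le hlim hc hh hφ hstar hcs hφs
    (fun k x hx => hγs k x (hla.trans_lt hx.1)) hab

end Involution

theorem stmt12 (p : ℕ) (hp : 2 ≤ p) (η : ℝ) (hη : 0 < η)
    (c : ℕ → ℂ) (φ : ℕ → ℝ) (γ : ℕ → ℝ → ℂ)
    (V : ℝ → ℝ)
    (hV : ∀ x ∈ Set.Ioi (0:ℝ),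
      (V x : ℂ) = ∑' k, c k * Complex.exp (-Complex.I * (φ k) * x) * γ k x)
    (hBV : ⨆ k, eVariationOn (γ k) (Set.Ioi 0) < ⊤)
    (hLp : ∫⁻ x in Set.Ioi (0:ℝ), (⨆ k, (‖γ k x‖₊ : ℝ≥0∞)) ^ p < ⊤)
    (hc : Summable fun k => ‖c k‖)
    (hsd : ∀ j : ℕ, 1 ≤ j → j ≤ p - 1 →
      Summable fun m : Fin j → ℕ => ‖∏ i, c (m i)‖ * |hFun j η (padFin j φ m)|)
    (hres : ∀ K J : ℕ, 1 ≤ K → K ≤ J → J ≤ p → ∀ (m : Fin J → ℕ) (ε : Fin J → ℝ),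
      (∀ i, ε i = 1 ∨ ε i = -1) → (K : ℝ) * η ≠ ∑ i, ε i * φ (m i))
    (hinv : ∃ star : ℕ → ℕ, Function.Involutive star ∧
      (∀ k, c (star k) = starRingEnd ℂ (c k)) ∧
      (∀ k, φ (star k) = -φ k) ∧
      (∀ k, ∀ x ∈ Set.Ioi (0:ℝ), γ (star k) x = starRingEnd ℂ (γ k x)))
    (θ θ' : ℝ → ℝ)
    (hθAC : ∀ a b : ℝ, 0 < a → a ≤ b →
      IntervalIntegrable θ' volume a b ∧ θ b - θ a = ∫ x in a..b, θ' x)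
    (hθ' : ∀ᵐ x ∂(volume.restrict (Set.Ioi (0:ℝ))),
      θ' x = (V x / η) * (Real.cos (η * x + 2 * θ x) - 1)) :
    ∀ J : ℕ, 2 ≤ J → J ≤ p → ∀ a b : ℝ, 0 ≤ a → a < b →
      ENNReal.ofReal |(∫ x in a..b, SFun0 η c φ γ J x).im|
        ≤ calEFun η c φ J * (⨆ k, eVariationOn (γ k) (Set.Ioi 0)) ^ J := by
  intro J hJ hJp a b ha hab
  have variation (k : ℕ) : BoundedVariationOn (γ k) (Set.Ioi 0) :=
    ((le_iSup (fun k => eVariationOn (γ k) (Set.Ioi 0)) k).trans_lt hBV).ne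
  have nonresonant : NonResonant η J φ := fun K L hK hKL hL m => by
    simpa using hres K L hK hKL (hL.trans hJp) m 1 fun _ => Or.inl rfl
  exact stmt12_general hBV (tendsto_zero_of_lintegral_iSup_lt_top variation hLp) hc hJ
    (hsd (J - 1) (by omega) (by omega)) nonresonant hinv ha hab
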